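/- arXiv:math/9808105 — 2 statements merged into one kernel-verified Lean document; each statement's English description precedes it below -/
import Mathlib

section
/- Let A_N : Ω^N(ℝ^N) → Ω^N(ℝ^N) be a differential operator on top-degree de Rham forms. There exists a sequence of differential operators {A_s : Ω^s(ℝ^N) → Ω^s(ℝ^N)}_{0≤s≤N} with d∘A_s = A_{s+1}∘d for all 0 ≤ s ≤ N−1 if and only if χ(A_N) is a constant function; moreover, in that case the lift can be chosen so that for 0 ≤ s ≤ N−2 the operator A_s is multiplication by the constant χ(A_N). -/
/-!
The proof rests on division by the characteristic (`exists_division`): the Leibniz rule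
`g ∂_i ∂^I f = ∂_i (g ∂^I f) - (∂_i g) ∂^I f`, applied repeatedly, turns any differential operator
into `A f = χ(A) f + Σ_j ∂_j (C_j f)` with differential operators `C_j`.

If `A` lifts, then `d ∘ A_{N-1} = A ∘ d` applied to the `(N-1)`-form with single coefficient `f` on
the basis element omitting `dx^i` shows that `χ(A) ∂_i f` is a divergence of smooth fields, which
are compactly supported when `f` is. Hence `∫ χ(A) ∂_i f = 0` for every test function `f`
(`chi_constant_of_lift`), so that every `∂_i χ(A)` vanishes and `χ(A)` is constant
(`constant_of_integral_pderiv`).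

Conversely, suppose `χ(A) = c`, and let `h` send the top form with coefficient `f` to the
`(N-1)`-form with components `± C_j f`, so that `A = c + d ∘ h`. The lift (`liftOp`) is
`A_{N-1} = c + h ∘ d`, and `c` in degrees below `N - 1`. It commutes with `d` (`liftOp_comm`):
`d (c + h d) = (c + d h) d = A d`, and `(c + h d) d = c d` because `d ∘ d = 0` (`dR_dR`).
-/

open scoped BigOperators

namespace PDO

/-- Partial derivative with respect to the `i`-th coordinate of `ℝ^N`. -/
noncomputable def pderiv' {N : ℕ} (i : Fin N) (f : (Fin N → ℝ) → ℝ) : (Fin N → ℝ) → ℝ :=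
  fun x => deriv (fun t => f (Function.update x i t)) (x i)

/-- Iterated partial derivative `∂^I = (∂/∂x^1)^{i_1} ⋯ (∂/∂x^N)^{i_N}`. -/
noncomputable def PPow {N : ℕ} (I : Fin N → ℕ) : ((Fin N → ℝ) → ℝ) → ((Fin N → ℝ) → ℝ) :=
  (List.finRange N).foldr (fun i g => (pderiv' i)^[I i] ∘ g) id

/-- `A` is a linear partial differential operator on `ℝ^N`:
`A(f) = Σ_I a_I ∂^I f` with smooth coefficients, finitely many nonzero. -/
def IsPDO {N : ℕ} (A : ((Fin N → ℝ) → ℝ) → ((Fin N → ℝ) → ℝ)) : Prop :=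
  ∃ a : (Fin N → ℕ) → (Fin N → ℝ) → ℝ,
    (∀ I, ContDiff ℝ (⊤ : ℕ∞) (a I)) ∧ {I | a I ≠ 0}.Finite ∧
      ∀ f, ContDiff ℝ (⊤ : ℕ∞) f → ∀ x, A f x = ∑' I, a I x * PPow I f x

/-- A de Rham form on `ℝ^N`, recorded by its coefficients on the basis
`(dx)^ε = (dx^1)^{ε^1} ∧ ⋯ ∧ (dx^N)^{ε^N}`. -/
abbrev FormR (N : ℕ) := (Fin N → Bool) → (Fin N → ℝ) → ℝ

/-- The form-degree `|ε|`. -/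
def wtR {N : ℕ} (ε : Fin N → Bool) : ℕ := ∑ i, if ε i then 1 else 0

/-- The sign exponent: the number of entries of `ε` below `i` which are set. -/
def posR {N : ℕ} (i : Fin N) (ε : Fin N → Bool) : ℕ := ∑ l, if l < i ∧ ε l then 1 else 0

/-- The exterior derivative on coefficients. -/
noncomputable def dR {N : ℕ} (ω : FormR N) : FormR N :=
  fun δ x => ∑ i : Fin N,
    if δ i then (-1 : ℝ) ^ posR i δ * pderiv' i (ω (Function.update δ i false)) x else 0

/-- A matrix of operators acting on de Rham forms. -/
abbrev FormOpR (N : ℕ) :=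
  (Fin N → Bool) → (Fin N → Bool) → ((Fin N → ℝ) → ℝ) → ((Fin N → ℝ) → ℝ)

/-- Application of a matrix of operators to a form. -/
noncomputable def applyFOR {N : ℕ} (M : FormOpR N) (ω : FormR N) : FormR N :=
  fun δ x => ∑ ε : Fin N → Bool, M ε δ (ω ε) x

end PDO
namespace PDO


/-- Smooth real functions on `ℝ^N`. -/
abbrev Smooth {N : ℕ} (f : (Fin N → ℝ) → ℝ) : Prop := ContDiff ℝ (⊤ : ℕ∞) f

/-! ### Partial derivatives of smooth functions -/

section Partial

variable {N : ℕ}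

theorem two_le_smooth : (2 : WithTop ℕ∞) ≤ ((⊤ : ℕ∞) : WithTop ℕ∞) := by
  have h : ((2 : ℕ∞) : WithTop ℕ∞) ≤ ((⊤ : ℕ∞) : WithTop ℕ∞) :=
    WithTop.coe_le_coe.2 le_top
  exact h

theorem smooth_zero : Smooth (0 : (Fin N → ℝ) → ℝ) := contDiff_const

theorem smooth_add {f g : (Fin N → ℝ) → ℝ} (hf : Smooth f) (hg : Smooth g) : Smooth (f + g) :=
  ContDiff.add hf hg

theorem smooth_mul {f g : (Fin N → ℝ) → ℝ} (hf : Smooth f) (hg : Smooth g) : Smooth (f * g) :=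
  ContDiff.mul hf hg

theorem smooth_smul (c : ℝ) {f : (Fin N → ℝ) → ℝ} (hf : Smooth f) : Smooth (c • f) :=
  ContDiff.const_smul c hf

theorem pderiv'_eq {f : (Fin N → ℝ) → ℝ} (hf : Smooth f) (i : Fin N) :
    pderiv' i f = fun x => fderiv ℝ f x (Pi.single i 1) := by
  funext x
  have h1 : HasDerivAt (Function.update x i) (Pi.single i 1) (x i) := hasDerivAt_update x i (x i)
  have h2 : HasFDerivAt f (fderiv ℝ f x) (Function.update x i (x i)) := by
    rw [Function.update_eq_self]
    exact (hf.differentiable (by simp) x).hasFDerivAt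
  exact (h2.comp_hasDerivAt (x i) h1).deriv

theorem smooth_pderiv {f : (Fin N → ℝ) → ℝ} (hf : Smooth f) (i : Fin N) :
    Smooth (pderiv' i f) := by
  rw [pderiv'_eq hf]
  exact (hf.fderiv_right (m := (⊤ : ℕ∞)) (by simp)).clm_apply contDiff_const

theorem pderiv_comm {f : (Fin N → ℝ) → ℝ} (hf : Smooth f) (i j : Fin N) :
    pderiv' i (pderiv' j f) = pderiv' j (pderiv' i f) := by
  have hd : Differentiable ℝ (fderiv ℝ f) :=
    (hf.fderiv_right (m := (⊤ : ℕ∞)) (by simp)).differentiable (by simp)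
  have key : ∀ k l : Fin N, ∀ x, pderiv' k (pderiv' l f) x
      = fderiv ℝ (fderiv ℝ f) x (Pi.single k 1) (Pi.single l 1) := by
    intro k l x
    rw [pderiv'_eq (smooth_pderiv hf l), pderiv'_eq hf]
    simp only
    rw [fderiv_clm_apply (hd x) (differentiableAt_const _)]
    simp
  funext x
  rw [key, key]
  have hs : IsSymmSndFDerivAt ℝ f x :=
    (hf.contDiffAt (x := x)).isSymmSndFDerivAt (by simpa using two_le_smooth)
  exact hs.eq _ _

theorem pderiv_add {f g : (Fin N → ℝ) → ℝ} (hf : Smooth f) (hg : Smooth g) (i : Fin N) :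
    pderiv' i (f + g) = pderiv' i f + pderiv' i g := by
  rw [pderiv'_eq hf, pderiv'_eq hg, pderiv'_eq (smooth_add hf hg)]
  funext x
  rw [fderiv_add (hf.differentiable (by simp) x) (hg.differentiable (by simp) x)]
  simp

theorem pderiv_mul {f g : (Fin N → ℝ) → ℝ} (hf : Smooth f) (hg : Smooth g) (i : Fin N) :
    pderiv' i (f * g) = pderiv' i f * g + f * pderiv' i g := by
  rw [pderiv'_eq hf, pderiv'_eq hg, pderiv'_eq (smooth_mul hf hg)]
  funext x
  rw [fderiv_mul (hf.differentiable (by simp) x) (hg.differentiable (by simp) x)]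
  simp
  ring

theorem pderiv_smul {f : (Fin N → ℝ) → ℝ} (c : ℝ) (i : Fin N) :
    pderiv' i (c • f) = c • pderiv' i f := by
  funext x
  simp [pderiv', deriv_const_mul_field]

theorem pderiv_zero (i : Fin N) : pderiv' i (0 : (Fin N → ℝ) → ℝ) = 0 := by
  funext x
  simp [pderiv']

theorem smooth_sum {α : Type*} (S : Finset α) {f : α → (Fin N → ℝ) → ℝ}
    (hf : ∀ k ∈ S, Smooth (f k)) : Smooth (∑ k ∈ S, f k) := by
  induction S using Finset.cons_induction with
  | empty => simpa using smooth_zero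
  | cons k S hk ih =>
    rw [Finset.sum_cons]
    exact smooth_add (hf k (by simp)) (ih fun l hl => hf l (by simp [hl]))

theorem pderiv_sum {α : Type*} (S : Finset α) {f : α → (Fin N → ℝ) → ℝ}
    (hf : ∀ k ∈ S, Smooth (f k)) (i : Fin N) :
    pderiv' i (∑ k ∈ S, f k) = ∑ k ∈ S, pderiv' i (f k) := by
  induction S using Finset.cons_induction with
  | empty => simpa using pderiv_zero i
  | cons k S hk ih =>
    have h : ∀ l ∈ S, Smooth (f l) := fun l hl => hf l (by simp [hl])
    rw [Finset.sum_cons, Finset.sum_cons, pderiv_add (hf k (by simp)) (smooth_sum S h), ih h]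

theorem pderiv_iter_smooth {f : (Fin N → ℝ) → ℝ} (hf : Smooth f) (i : Fin N) (n : ℕ) :
    Smooth ((pderiv' i)^[n] f) := by
  induction n with
  | zero => exact hf
  | succ n ih => rw [Function.iterate_succ_apply']; exact smooth_pderiv ih i

theorem pderiv_iter_comm {f : (Fin N → ℝ) → ℝ} (hf : Smooth f) (i j : Fin N) (n : ℕ) :
    (pderiv' j)^[n] (pderiv' i f) = pderiv' i ((pderiv' j)^[n] f) := by
  induction n with
  | zero => rfl
  | succ n ih =>
    rw [Function.iterate_succ_apply', Function.iterate_succ_apply', ih,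
      pderiv_comm (pderiv_iter_smooth hf j n)]

end Partial

/-! ### Iterated partial derivatives -/

section Iterated

variable {N : ℕ}

/-- The operator `∂^I` restricted to the coordinates in a list; `PPow` is the case of the list of
all coordinates. -/
noncomputable def PList (L : List (Fin N)) (I : Fin N → ℕ) :
    ((Fin N → ℝ) → ℝ) → ((Fin N → ℝ) → ℝ) :=
  L.foldr (fun i g => (pderiv' i)^[I i] ∘ g) id

theorem PList_cons (k : Fin N) (L : List (Fin N)) (I : Fin N → ℕ) (f : (Fin N → ℝ) → ℝ) :
    PList (k :: L) I f = (pderiv' k)^[I k] (PList L I f) := rfl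

theorem PList_smooth (L : List (Fin N)) (I : Fin N → ℕ) {f : (Fin N → ℝ) → ℝ} (hf : Smooth f) :
    Smooth (PList L I f) := by
  induction L with
  | nil => exact hf
  | cons k L ih => rw [PList_cons]; exact pderiv_iter_smooth ih k _

theorem PList_pderiv (L : List (Fin N)) (I : Fin N → ℕ) (i : Fin N) {f : (Fin N → ℝ) → ℝ}
    (hf : Smooth f) : PList L I (pderiv' i f) = pderiv' i (PList L I f) := by
  induction L with
  | nil => rfl
  | cons k L ih =>
    rw [PList_cons, PList_cons, ih, pderiv_iter_comm (PList_smooth L I hf)]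

theorem PList_congr (L : List (Fin N)) {I J : Fin N → ℕ} (h : ∀ k ∈ L, I k = J k)
    (f : (Fin N → ℝ) → ℝ) : PList L I f = PList L J f := by
  induction L with
  | nil => rfl
  | cons k L ih =>
    rw [PList_cons, PList_cons, ih fun l hl => h l (by simp [hl]), h k (by simp)]

theorem PList_add_single (L : List (Fin N)) (hL : L.Nodup) (I : Fin N → ℕ) {i : Fin N}
    (hi : i ∈ L) {f : (Fin N → ℝ) → ℝ} (hf : Smooth f) :
    PList L (I + Pi.single i 1) f = pderiv' i (PList L I f) := by
  induction L with
  | nil => simp at hi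
  | cons k L ih =>
    rw [List.nodup_cons] at hL
    rw [PList_cons, PList_cons]
    by_cases hk : k = i
    · subst hk
      have h : PList L (I + Pi.single k 1) f = PList L I f := by
        refine PList_congr L (fun l hl => ?_) f
        have : l ≠ k := fun h => hL.1 (h ▸ hl)
        simp [this]
      rw [h]
      simp only [Pi.add_apply, Pi.single_eq_same]
      rw [Function.iterate_succ_apply']
    · have hi' : i ∈ L := by
        rcases List.mem_cons.1 hi with h | h
        · exact absurd h.symm hk
        · exact h
      rw [ih hL.2 hi']
      simp only [Pi.add_apply, Pi.single_eq_of_ne hk, add_zero]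
      rw [pderiv_iter_comm (PList_smooth L I hf)]

theorem PPow_eq_PList (I : Fin N → ℕ) : PPow I = PList (List.finRange N) I := rfl

theorem PPow_smooth (I : Fin N → ℕ) {f : (Fin N → ℝ) → ℝ} (hf : Smooth f) :
    Smooth (PPow I f) := PList_smooth _ I hf

theorem PPow_pderiv (I : Fin N → ℕ) (i : Fin N) {f : (Fin N → ℝ) → ℝ} (hf : Smooth f) :
    PPow I (pderiv' i f) = pderiv' i (PPow I f) := PList_pderiv _ I i hf

theorem PPow_add_single (I : Fin N → ℕ) (i : Fin N) {f : (Fin N → ℝ) → ℝ} (hf : Smooth f) :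
    PPow (I + Pi.single i 1) f = pderiv' i (PPow I f) :=
  PList_add_single _ (List.nodup_finRange N) I (List.mem_finRange i) hf

theorem PPow_zero_index (f : (Fin N → ℝ) → ℝ) : PPow 0 f = f := by
  rw [PPow_eq_PList]
  induction List.finRange N with
  | nil => rfl
  | cons k L ih => rw [PList_cons, ih]; rfl

theorem sum_single_index (i : Fin N) : ∑ t, (Pi.single i 1 : Fin N → ℕ) t = 1 := by simp

/-- Induction on multi-indices by raising one exponent at a time. -/
theorem multiindex_induction {P : (Fin N → ℕ) → Prop} (h0 : P 0)
    (h1 : ∀ I i, P I → P (I + Pi.single i 1)) (I : Fin N → ℕ) : P I := by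
  induction hn : ∑ t, I t generalizing I with
  | zero =>
    have : I = 0 := by
      funext t
      simpa using (Finset.sum_eq_zero_iff.1 hn) t (Finset.mem_univ t)
    exact this ▸ h0
  | succ n ih =>
    obtain ⟨i, -, hi⟩ : ∃ i ∈ Finset.univ, I i ≠ 0 := by
      apply Finset.exists_ne_zero_of_sum_ne_zero
      omega
    have hI : I = (I - Pi.single i 1) + Pi.single i 1 := by
      funext t
      by_cases ht : t = i
      · subst ht; simp; omega
      · simp [ht]
    rw [hI]
    apply h1
    apply ih
    have h := congrArg (fun J : Fin N → ℕ => ∑ t, J t) hI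
    simp only [Pi.add_apply, Finset.sum_add_distrib, sum_single_index] at h
    omega

theorem PPow_add (I : Fin N → ℕ) {f g : (Fin N → ℝ) → ℝ} (hf : Smooth f) (hg : Smooth g) :
    PPow I (f + g) = PPow I f + PPow I g := by
  induction I using multiindex_induction with
  | h0 => simp [PPow_zero_index]
  | h1 I i ih =>
    rw [PPow_add_single I i (smooth_add hf hg), PPow_add_single I i hf, PPow_add_single I i hg, ih,
      pderiv_add (PPow_smooth I hf) (PPow_smooth I hg)]

theorem PPow_smul (I : Fin N → ℕ) (c : ℝ) {f : (Fin N → ℝ) → ℝ} (hf : Smooth f) :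
    PPow I (c • f) = c • PPow I f := by
  induction I using multiindex_induction with
  | h0 => simp [PPow_zero_index]
  | h1 I i ih =>
    rw [PPow_add_single I i (smooth_smul c hf), PPow_add_single I i hf, ih, pderiv_smul]

theorem PPow_zero (I : Fin N → ℕ) : PPow I (0 : (Fin N → ℝ) → ℝ) = 0 := by
  simpa using PPow_smul I 0 (smooth_zero (N := N))

end Iterated

/-! ### Differential operators -/

section Operators

variable {N : ℕ}

/-- A differential operator as a sum over a finite set of multi-indices. -/
theorem IsPDO.exists_finset {A : ((Fin N → ℝ) → ℝ) → ((Fin N → ℝ) → ℝ)} (hA : IsPDO A) :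
    ∃ (S : Finset (Fin N → ℕ)) (a : (Fin N → ℕ) → (Fin N → ℝ) → ℝ), (∀ I, Smooth (a I)) ∧
      ∀ f, Smooth f → A f = ∑ I ∈ S, a I * PPow I f := by
  obtain ⟨a, ha, hfin, h⟩ := hA
  refine ⟨hfin.toFinset, a, ha, fun f hf => ?_⟩
  funext x
  rw [h f hf x, tsum_eq_sum (s := hfin.toFinset), Finset.sum_apply]
  · rfl
  · intro I hI
    have : a I = 0 := by simpa using hI
    simp [this]

theorem IsPDO.congr {A B : ((Fin N → ℝ) → ℝ) → ((Fin N → ℝ) → ℝ)} (hA : IsPDO A)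
    (h : ∀ f, Smooth f → B f = A f) : IsPDO B := by
  obtain ⟨a, ha, hfin, h'⟩ := hA
  exact ⟨a, ha, hfin, fun f hf x => by rw [h f hf, h' f hf]⟩

theorem IsPDO.zero : IsPDO (fun _ : (Fin N → ℝ) → ℝ => (0 : (Fin N → ℝ) → ℝ)) :=
  ⟨fun _ => 0, fun _ => smooth_zero, by simp, fun f _ x => by simp⟩

theorem IsPDO.add {A B : ((Fin N → ℝ) → ℝ) → ((Fin N → ℝ) → ℝ)} (hA : IsPDO A) (hB : IsPDO B) :
    IsPDO (fun f => A f + B f) := by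
  obtain ⟨a, ha, hfa, hA⟩ := hA
  obtain ⟨b, hb, hfb, hB⟩ := hB
  refine ⟨fun I => a I + b I, fun I => smooth_add (ha I) (hb I),
    (hfa.union hfb).subset fun I hI => ?_, fun f hf x => ?_⟩
  · by_contra hc
    simp only [Set.mem_union, Set.mem_ofPred_eq, not_or, not_not] at hc
    exact hI (by simp [hc.1, hc.2])
  · have hsum : ∀ c : (Fin N → ℕ) → (Fin N → ℝ) → ℝ, {I | c I ≠ 0}.Finite →
        Summable fun I => c I x * PPow I f x := fun c hc =>
      summable_of_hasFiniteSupport (hc.subset fun I hI h => hI (by simp [h]))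
    simp only [Pi.add_apply, add_mul]
    rw [(hsum a hfa).tsum_add (hsum b hfb), hA f hf, hB f hf]

theorem IsPDO.sum {α : Type*} (S : Finset α)
    {A : α → ((Fin N → ℝ) → ℝ) → ((Fin N → ℝ) → ℝ)} (hA : ∀ k ∈ S, IsPDO (A k)) :
    IsPDO (fun f => ∑ k ∈ S, A k f) := by
  induction S using Finset.cons_induction with
  | empty => simpa using IsPDO.zero
  | cons k S hk ih =>
    simp only [Finset.sum_cons]
    exact (hA k (by simp)).add (ih fun l hl => hA l (by simp [hl]))

theorem IsPDO.monomial {g : (Fin N → ℝ) → ℝ} (hg : Smooth g) (I : Fin N → ℕ) :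
    IsPDO (fun f => g * PPow I f) := by
  classical
  refine ⟨Pi.single I g, fun J => ?_, (Set.finite_singleton I).subset fun J hJ => ?_,
    fun f _ x => ?_⟩
  · by_cases h : J = I
    · subst h; simpa using hg
    · rw [Pi.single_eq_of_ne h]; exact smooth_zero
  · by_contra h
    exact hJ (by rw [Pi.single_eq_of_ne h])
  · rw [tsum_eq_single I]
    · simp
    · intro J hJ
      rw [Pi.single_eq_of_ne hJ]
      simp

theorem IsPDO.id : IsPDO (fun f : (Fin N → ℝ) → ℝ => f) := by
  have h1 : Smooth (1 : (Fin N → ℝ) → ℝ) := contDiff_const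
  exact (IsPDO.monomial h1 0).congr fun f _ => by rw [PPow_zero_index, one_mul]

theorem IsPDO.smul {A : ((Fin N → ℝ) → ℝ) → ((Fin N → ℝ) → ℝ)} (hA : IsPDO A) (c : ℝ) :
    IsPDO (fun f => c • A f) := by
  obtain ⟨S, a, ha, h⟩ := hA.exists_finset
  refine (IsPDO.sum S fun I _ => IsPDO.monomial (smooth_smul c (ha I)) I).congr fun f hf => ?_
  rw [h f hf, Finset.smul_sum]
  simp only [smul_mul_assoc]

theorem IsPDO.comp_pderiv {A : ((Fin N → ℝ) → ℝ) → ((Fin N → ℝ) → ℝ)} (hA : IsPDO A)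
    (i : Fin N) : IsPDO (fun f => A (pderiv' i f)) := by
  obtain ⟨S, a, ha, h⟩ := hA.exists_finset
  refine (IsPDO.sum S fun I _ => IsPDO.monomial (ha I) (I + Pi.single i 1)).congr fun f hf => ?_
  rw [h _ (smooth_pderiv hf i)]
  refine Finset.sum_congr rfl fun I _ => ?_
  rw [PPow_pderiv I i hf, PPow_add_single I i hf]

theorem IsPDO.smooth {A : ((Fin N → ℝ) → ℝ) → ((Fin N → ℝ) → ℝ)} (hA : IsPDO A)
    {f : (Fin N → ℝ) → ℝ} (hf : Smooth f) : Smooth (A f) := by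
  obtain ⟨S, a, ha, h⟩ := hA.exists_finset
  rw [h f hf]
  exact smooth_sum S fun I _ => smooth_mul (ha I) (PPow_smooth I hf)

theorem IsPDO.map_add {A : ((Fin N → ℝ) → ℝ) → ((Fin N → ℝ) → ℝ)} (hA : IsPDO A)
    {f g : (Fin N → ℝ) → ℝ} (hf : Smooth f) (hg : Smooth g) : A (f + g) = A f + A g := by
  obtain ⟨S, a, ha, h⟩ := hA.exists_finset
  rw [h _ (smooth_add hf hg), h f hf, h g hg, ← Finset.sum_add_distrib]
  refine Finset.sum_congr rfl fun I _ => ?_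
  rw [PPow_add I hf hg, mul_add]

theorem IsPDO.map_smul {A : ((Fin N → ℝ) → ℝ) → ((Fin N → ℝ) → ℝ)} (hA : IsPDO A)
    {f : (Fin N → ℝ) → ℝ} (hf : Smooth f) (c : ℝ) : A (c • f) = c • A f := by
  obtain ⟨S, a, ha, h⟩ := hA.exists_finset
  rw [h _ (smooth_smul c hf), h f hf, Finset.smul_sum]
  refine Finset.sum_congr rfl fun I _ => ?_
  rw [PPow_smul I c hf, mul_smul_comm]

theorem IsPDO.map_zero {A : ((Fin N → ℝ) → ℝ) → ((Fin N → ℝ) → ℝ)} (hA : IsPDO A) :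
    A 0 = 0 := by
  simpa using hA.map_smul smooth_zero 0

theorem IsPDO.map_sum {A : ((Fin N → ℝ) → ℝ) → ((Fin N → ℝ) → ℝ)} (hA : IsPDO A)
    {α : Type*} (S : Finset α) {f : α → (Fin N → ℝ) → ℝ} (hf : ∀ k ∈ S, Smooth (f k)) :
    A (∑ k ∈ S, f k) = ∑ k ∈ S, A (f k) := by
  induction S using Finset.cons_induction with
  | empty => simpa using hA.map_zero
  | cons k S hk ih =>
    have h : ∀ l ∈ S, Smooth (f l) := fun l hl => hf l (by simp [hl])
    rw [Finset.sum_cons, Finset.sum_cons, hA.map_add (hf k (by simp)) (smooth_sum S h), ih h]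

theorem compactSupport_pderiv {f : (Fin N → ℝ) → ℝ} (hf : Smooth f) (hc : HasCompactSupport f)
    (i : Fin N) : HasCompactSupport (pderiv' i f) := by
  rw [pderiv'_eq hf]
  exact hc.fderiv_apply (𝕜 := ℝ) _

theorem compactSupport_PPow {f : (Fin N → ℝ) → ℝ} (hf : Smooth f) (hc : HasCompactSupport f)
    (I : Fin N → ℕ) : HasCompactSupport (PPow I f) := by
  induction I using multiindex_induction with
  | h0 => rwa [PPow_zero_index]
  | h1 I i ih =>
    rw [PPow_add_single I i hf]
    exact compactSupport_pderiv (PPow_smooth I hf) ih i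

theorem compactSupport_sum {α : Type*} (S : Finset α) {f : α → (Fin N → ℝ) → ℝ}
    (hf : ∀ k ∈ S, HasCompactSupport (f k)) : HasCompactSupport (∑ k ∈ S, f k) := by
  induction S using Finset.cons_induction with
  | empty => simpa using HasCompactSupport.zero
  | cons k S hk ih =>
    rw [Finset.sum_cons]
    exact (hf k (by simp)).add (ih fun l hl => hf l (by simp [hl]))

theorem IsPDO.compactSupport {A : ((Fin N → ℝ) → ℝ) → ((Fin N → ℝ) → ℝ)} (hA : IsPDO A)
    {f : (Fin N → ℝ) → ℝ} (hf : Smooth f) (hc : HasCompactSupport f) :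
    HasCompactSupport (A f) := by
  obtain ⟨S, a, ha, h⟩ := hA.exists_finset
  rw [h f hf]
  exact compactSupport_sum S fun I _ => (compactSupport_PPow hf hc I).mul_left

end Operators

/-! ### Division by the characteristic -/

section Characteristic

variable {N : ℕ}

/-- The division by the characteristic for a single term `g ∂^I`: the induction step is the
Leibniz rule `g ∂_i ∂^I f = ∂_i (g ∂^I f) - (∂_i g) ∂^I f`, which trades one order of the operator
for a divergence. -/
theorem monomial_division (I : Fin N → ℕ) {g : (Fin N → ℝ) → ℝ} (hg : Smooth g) :
    ∃ C : Fin N → ((Fin N → ℝ) → ℝ) → ((Fin N → ℝ) → ℝ), (∀ j, IsPDO (C j)) ∧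
      ∀ f, Smooth f → g * PPow I f =
        ((-1 : ℝ) ^ (∑ t, I t) • PPow I g) * f + ∑ j, pderiv' j (C j f) := by
  classical
  induction I using multiindex_induction generalizing g with
  | h0 =>
    refine ⟨fun _ _ => 0, fun _ => IsPDO.zero, fun f _ => ?_⟩
    simp [PPow_zero_index, pderiv_zero]
  | h1 I i ih =>
    obtain ⟨C, hC, h⟩ := ih (smooth_smul (-1) (smooth_pderiv hg i))
    have hm := IsPDO.monomial hg I
    refine ⟨fun j f => C j f + if j = i then g * PPow I f else 0, fun j => (hC j).add ?_,
      fun f hf => ?_⟩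
    · by_cases hj : j = i
      · simpa [hj] using hm
      · simpa [hj] using IsPDO.zero
    · have hsm : ∀ j, Smooth (if j = i then g * PPow I f else 0) := by
        intro j
        split_ifs
        · exact hm.smooth hf
        · exact smooth_zero
      have hdiv : ∑ j, pderiv' j (C j f + if j = i then g * PPow I f else 0)
          = ∑ j, pderiv' j (C j f) + pderiv' i (g * PPow I f) := by
        rw [Finset.sum_congr rfl fun j _ => pderiv_add ((hC j).smooth hf) (hsm j) j,
          Finset.sum_add_distrib, Finset.sum_eq_single i (f := fun j => pderiv' j (ite _ _ _))]
        · simp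
        · intro j _ hj; simp [hj, pderiv_zero]
        · simp
      have h' := h f hf
      rw [hdiv, pderiv_mul hg (PPow_smooth I hf), PPow_add_single I i hf, PPow_add_single I i hg,
        ← PPow_pderiv I i hg]
      rw [PPow_smul I _ (smooth_pderiv hg i)] at h'
      have hs : ∑ t, (I + Pi.single i 1 : Fin N → ℕ) t = (∑ t, I t) + 1 := by
        simp only [Pi.add_apply, Finset.sum_add_distrib, sum_single_index]
      rw [hs, pow_succ]
      funext x
      have h'' := congrFun h' x
      simp only [Pi.add_apply, Pi.mul_apply, Pi.smul_apply, smul_eq_mul] at h'' ⊢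
      linarith

/-- The characteristic `Σ_I (-1)^{|I|} ∂^I a_I` of the operator with coefficients `a`. -/
noncomputable def chi (a : (Fin N → ℕ) → (Fin N → ℝ) → ℝ) (x : Fin N → ℝ) : ℝ :=
  ∑' I, (-1 : ℝ) ^ (∑ t, I t) * PPow I (a I) x

theorem chi_eq_sum {a : (Fin N → ℕ) → (Fin N → ℝ) → ℝ} (hfin : {I | a I ≠ 0}.Finite) :
    chi a = ∑ I ∈ hfin.toFinset, (-1 : ℝ) ^ (∑ t, I t) • PPow I (a I) := by
  funext x
  rw [chi, tsum_eq_sum (s := hfin.toFinset), Finset.sum_apply]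
  · rfl
  · intro I hI
    have : a I = 0 := by simpa using hI
    simp [this, PPow_zero]

theorem chi_smooth {a : (Fin N → ℕ) → (Fin N → ℝ) → ℝ} (ha : ∀ I, Smooth (a I))
    (hfin : {I | a I ≠ 0}.Finite) : Smooth (chi a) := by
  rw [chi_eq_sum hfin]
  exact smooth_sum _ fun I _ => smooth_smul _ (PPow_smooth I (ha I))

/-- Division by the characteristic: a differential operator is multiplication by its characteristic
up to the divergence of a vector of differential operators. -/
theorem exists_division {a : (Fin N → ℕ) → (Fin N → ℝ) → ℝ} (ha : ∀ I, Smooth (a I))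
    (hfin : {I | a I ≠ 0}.Finite) :
    ∃ C : Fin N → ((Fin N → ℝ) → ℝ) → ((Fin N → ℝ) → ℝ), (∀ j, IsPDO (C j)) ∧
      ∀ f, Smooth f → ∀ x, ∑' I, a I x * PPow I f x =
        chi a x * f x + ∑ j, pderiv' j (C j f) x := by
  choose C hC h using fun I => monomial_division I (ha I)
  refine ⟨fun j f => ∑ I ∈ hfin.toFinset, C I j f, fun j => IsPDO.sum _ fun I _ => hC I j,
    fun f hf x => ?_⟩
  rw [tsum_eq_sum (s := hfin.toFinset)]
  · have h1 : ∀ j, pderiv' j (∑ I ∈ hfin.toFinset, C I j f)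
        = ∑ I ∈ hfin.toFinset, pderiv' j (C I j f) := fun j =>
      pderiv_sum _ (fun I _ => (hC I j).smooth hf) j
    simp only [h1, Finset.sum_apply]
    rw [Finset.sum_comm, chi_eq_sum hfin, Finset.sum_apply, Finset.sum_mul,
      ← Finset.sum_add_distrib]
    refine Finset.sum_congr rfl fun I _ => ?_
    have := congrFun (h I f hf) x
    simpa [Finset.sum_apply, mul_assoc] using this
  · intro I hI
    have : a I = 0 := by simpa using hI
    simp [this]

end Characteristic

/-! ### Test functions -/

section TestFunctions

variable {N : ℕ}

open MeasureTheory in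
/-- Integration by parts against a compactly supported function. -/
theorem integral_mul_pderiv {f g : (Fin N → ℝ) → ℝ} (hf : Smooth f) (hg : Smooth g)
    (hc : HasCompactSupport g) (i : Fin N) :
    ∫ x, f x * pderiv' i g x = - ∫ x, pderiv' i f x * g x := by
  have hcg := compactSupport_pderiv hg hc i
  have i1 : Integrable (fun x => pderiv' i f x * g x) :=
    (smooth_mul (smooth_pderiv hf i) hg).continuous.integrable_of_hasCompactSupport hc.mul_left
  have i2 : Integrable (fun x => f x * pderiv' i g x) :=
    (smooth_mul hf (smooth_pderiv hg i)).continuous.integrable_of_hasCompactSupport hcg.mul_left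
  have i3 : Integrable (fun x => f x * g x) :=
    (smooth_mul hf hg).continuous.integrable_of_hasCompactSupport hc.mul_left
  rw [pderiv'_eq hf] at i1 ⊢
  rw [pderiv'_eq hg] at i2 ⊢
  exact integral_mul_fderiv_eq_neg_fderiv_mul_of_integrable i1 i2 i3
    (fun x _ => hf.differentiable (by simp) x) (fun x _ => hg.differentiable (by simp) x)

open MeasureTheory in
theorem integral_pderiv_eq_zero {g : (Fin N → ℝ) → ℝ} (hg : Smooth g)
    (hc : HasCompactSupport g) (i : Fin N) : ∫ x, pderiv' i g x = 0 := by
  have h1 : Smooth (1 : (Fin N → ℝ) → ℝ) := contDiff_const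
  have h0 : pderiv' i (1 : (Fin N → ℝ) → ℝ) = 0 := by funext x; simp [pderiv']
  simpa [h0] using integral_mul_pderiv h1 hg hc i

open MeasureTheory in
/-- A smooth function orthogonal to all partial derivatives of test functions is constant. -/
theorem constant_of_integral_pderiv {u : (Fin N → ℝ) → ℝ} (hu : Smooth u)
    (h : ∀ i, ∀ f, Smooth f → HasCompactSupport f → ∫ x, u x * pderiv' i f x = 0) :
    ∃ c, ∀ x, u x = c := by
  have hz : ∀ i, pderiv' i u = 0 := by
    intro i
    have hcont := (smooth_pderiv hu i).continuous
    have hae := ae_eq_zero_of_integral_contDiff_smul_eq_zero (μ := volume)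
      hcont.locallyIntegrable (fun f hf hc => by
        have := integral_mul_pderiv hu hf hc i
        rw [h i f hf hc] at this
        simp only [smul_eq_mul, mul_comm (f _)]
        linarith)
    exact (hcont.ae_eq_iff_eq volume continuous_zero).1 hae
  refine ⟨u 0, fun x => is_const_of_fderiv_eq_zero (hu.differentiable (by simp)) (fun y => ?_) x 0⟩
  refine ContinuousLinearMap.coe_injective (LinearMap.pi_ext' fun i => LinearMap.ext_ring ?_)
  have := congrFun (hz i) y
  rw [pderiv'_eq hu] at this
  simpa using this

end TestFunctions

/-! ### The exterior derivative in coordinates -/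

section Forms

variable {N : ℕ}

/-- The index of the top-degree basis form `dx^1 ∧ ⋯ ∧ dx^N`. -/
def top (N : ℕ) : Fin N → Bool := fun _ => true

/-- The index of the `(N-1)`-form omitting `dx^j`. -/
def cotop (j : Fin N) : Fin N → Bool := Function.update (top N) j false

theorem cotop_injective : Function.Injective (cotop (N := N)) := by
  intro i j h
  by_contra hij
  have := congrFun h i
  simp [cotop, top, Function.update_of_ne hij] at this

theorem update_eq_cotop {δ : Fin N → Bool} {i j : Fin N} (hδ : δ i = true)
    (h : Function.update δ i false = cotop j) : i = j ∧ δ = top N := by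
  have hij : i = j := by
    by_contra hij
    have := congrFun h i
    simp [cotop, top, Function.update_of_ne hij] at this
  refine ⟨hij, ?_⟩
  subst hij
  funext t
  by_cases ht : t = i
  · subst ht; exact hδ
  · have := congrFun h t
    simpa [cotop, Function.update_of_ne ht] using this

theorem wtR_update {δ : Fin N → Bool} {i : Fin N} (hδ : δ i = true) :
    wtR (Function.update δ i false) + 1 = wtR δ := by
  unfold wtR
  rw [← Finset.add_sum_erase _ _ (Finset.mem_univ i),
    ← Finset.add_sum_erase (a := i) (f := fun t => if δ t = true then 1 else 0) _
      (Finset.mem_univ i)]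
  have h : ∀ t ∈ Finset.univ.erase i, (if Function.update δ i false t = true then 1 else 0)
      = if δ t = true then 1 else 0 := fun t ht => by
    rw [Function.update_of_ne (Finset.ne_of_mem_erase ht)]
  rw [Finset.sum_congr rfl h]
  simp [hδ]
  omega

theorem wtR_top : wtR (top N) = N := by simp [wtR, top]

theorem eq_top_of_wtR {δ : Fin N → Bool} (h : wtR δ = N) : δ = top N := by
  by_contra hne
  obtain ⟨i, hi⟩ : ∃ i, δ i ≠ true := by
    by_contra hc
    push Not at hc
    exact hne (funext hc)
  have hlt : wtR δ < ∑ _i : Fin N, 1 :=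
    Finset.sum_lt_sum (fun t _ => by split_ifs <;> simp) ⟨i, Finset.mem_univ i, by simp [hi]⟩
  simp at hlt
  omega

theorem wtR_cotop (j : Fin N) : wtR (cotop j) + 1 = N := by
  rw [cotop, wtR_update rfl, wtR_top]

theorem posR_update_of_not_lt (δ : Fin N → Bool) {i j : Fin N} (h : ¬ i < j) :
    posR j (Function.update δ i false) = posR j δ := by
  unfold posR
  refine Finset.sum_congr rfl fun t _ => ?_
  by_cases ht : t = i
  · subst ht; simp [h]
  · rw [Function.update_of_ne ht]

theorem posR_update_of_lt {δ : Fin N → Bool} {i j : Fin N} (h : i < j) (hδ : δ i = true) :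
    posR j (Function.update δ i false) + 1 = posR j δ := by
  unfold posR
  rw [← Finset.add_sum_erase _ _ (Finset.mem_univ i),
    ← Finset.add_sum_erase (a := i) (f := fun t => if t < j ∧ δ t = true then 1 else 0) _
      (Finset.mem_univ i)]
  have h' : ∀ t ∈ Finset.univ.erase i,
      (if t < j ∧ Function.update δ i false t = true then 1 else 0)
      = if t < j ∧ δ t = true then 1 else 0 := fun t ht => by
    rw [Function.update_of_ne (Finset.ne_of_mem_erase ht)]
  rw [Finset.sum_congr rfl h']
  simp [hδ, h]
  omega

/-- Removing two different directions in the two possible orders gives opposite signs; this is the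
cancellation behind `d ∘ d = 0`. -/
theorem sign_swap {δ : Fin N → Bool} {i j : Fin N} (hij : i < j) (hi : δ i = true) :
    (-1 : ℝ) ^ posR i δ * (-1) ^ posR j (Function.update δ i false)
      = -((-1) ^ posR j δ * (-1) ^ posR i (Function.update δ j false)) := by
  rw [posR_update_of_not_lt δ (not_lt.2 hij.le), ← posR_update_of_lt hij hi, pow_succ]
  ring

theorem dR_eq (ω : FormR N) (δ : Fin N → Bool) :
    dR ω δ = ∑ i : Fin N, if δ i then
      (-1 : ℝ) ^ posR i δ • pderiv' i (ω (Function.update δ i false)) else 0 := by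
  funext x
  rw [dR, Finset.sum_apply]
  refine Finset.sum_congr rfl fun i _ => ?_
  split_ifs <;> simp

theorem dR_term_smooth {ω : FormR N} (hω : ∀ ε, Smooth (ω ε)) (δ : Fin N → Bool) (i : Fin N) :
    Smooth (if δ i then
      (-1 : ℝ) ^ posR i δ • pderiv' i (ω (Function.update δ i false)) else 0) := by
  split_ifs
  · exact smooth_smul _ (smooth_pderiv (hω _) i)
  · exact smooth_zero

theorem dR_smooth {ω : FormR N} (hω : ∀ ε, Smooth (ω ε)) (δ : Fin N → Bool) :
    Smooth (dR ω δ) := by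
  rw [dR_eq]
  exact smooth_sum _ fun i _ => dR_term_smooth hω δ i

theorem dR_dR {ω : FormR N} (hω : ∀ ε, Smooth (ω ε)) : dR (dR ω) = 0 := by
  funext δ x
  set T : Fin N → Fin N → ℝ := fun i j =>
    if δ i = true ∧ Function.update δ i false j = true then
      (-1 : ℝ) ^ posR i δ * (-1) ^ posR j (Function.update δ i false) *
        pderiv' i (pderiv' j (ω (Function.update (Function.update δ i false) j false))) x
    else 0 with hT
  have h1 : dR (dR ω) δ x = ∑ i, ∑ j, T i j := by
    rw [dR]
    refine Finset.sum_congr rfl fun i _ => ?_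
    by_cases hi : δ i = true
    · rw [if_pos hi, dR_eq, pderiv_sum _ fun j _ => dR_term_smooth hω _ j, Finset.sum_apply,
        Finset.mul_sum]
      refine Finset.sum_congr rfl fun j _ => ?_
      by_cases hj : Function.update δ i false j = true
      · simp only [hT, hi, hj, and_self, if_true]
        rw [pderiv_smul]
        simp only [Pi.smul_apply, smul_eq_mul]
        ring
      · simp [hT, hj, pderiv_zero]
    · simp [hT, hi]
  have hlt : ∀ i j, i < j → T i j = - T j i := by
    intro i j hij
    by_cases hi : δ i = true
    · by_cases hj : δ j = true
      · have e1 : Function.update δ i false j = true := by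
          rw [Function.update_of_ne hij.ne', hj]
        have e2 : Function.update δ j false i = true := by
          rw [Function.update_of_ne hij.ne, hi]
        simp only [hT, hi, hj, e1, e2, and_self, if_true]
        rw [sign_swap hij hi, Function.update_comm hij.ne, pderiv_comm (hω _)]
        ring
      · simp [hT, hj, Function.update_of_ne hij.ne']
    · simp [hT, hi, Function.update_of_ne hij.ne]
  have hanti : ∀ i j, T i j = - T j i := by
    intro i j
    rcases lt_trichotomy i j with h | h | h
    · exact hlt i j h
    · subst h; simp [hT]
    · rw [hlt j i h, neg_neg]
  have h2 : ∑ i, ∑ j, T i j = - ∑ i, ∑ j, T i j := by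
    conv_lhs => rw [Finset.sum_comm]
    rw [← Finset.sum_neg_distrib]
    refine Finset.sum_congr rfl fun i _ => ?_
    rw [← Finset.sum_neg_distrib]
    exact Finset.sum_congr rfl fun j _ => hanti j i
  rw [h1]
  simp only [Pi.zero_apply]
  linarith

theorem dR_top (ω : FormR N) :
    dR ω (top N) = ∑ i : Fin N, (-1 : ℝ) ^ posR i (top N) • pderiv' i (ω (cotop i)) := by
  rw [dR_eq]
  exact Finset.sum_congr rfl fun i _ => if_pos rfl

/-- The exterior derivative of an `(N-1)`-form `f dx^1 ∧ ⋯ (omit dx^i) ⋯ ∧ dx^N`. -/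
theorem dR_single (i : Fin N) (f : (Fin N → ℝ) → ℝ) :
    dR (fun ε => if ε = cotop i then f else 0)
      = fun ε => if ε = top N then (-1 : ℝ) ^ posR i (top N) • pderiv' i f else 0 := by
  funext δ
  rw [dR_eq]
  by_cases hδ : δ = top N
  · subst hδ
    rw [if_pos rfl, Finset.sum_eq_single i]
    · rw [if_pos (show top N i = true from rfl),
        if_pos (show Function.update (top N) i false = cotop i from rfl)]
    · intro k _ hk
      rw [if_pos (show top N k = true from rfl), if_neg, pderiv_zero, smul_zero]
      exact fun h => hk (update_eq_cotop rfl h).1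
    · simp
  · rw [if_neg hδ]
    refine Finset.sum_eq_zero fun k _ => ?_
    by_cases hk : δ k = true
    · rw [if_pos hk, if_neg, pderiv_zero, smul_zero]
      exact fun h => hδ (update_eq_cotop hk h).2
    · rw [if_neg hk]

theorem applyFOR_eq (M : FormOpR N) (ω : FormR N) (δ : Fin N → Bool) :
    applyFOR M ω δ = ∑ ε, M ε δ (ω ε) := by
  funext x
  rw [applyFOR, Finset.sum_apply]

end Forms

/-! ### The obstruction and the lift -/

section Lifting

variable {N : ℕ}

/-- If `A d = d B` on `(N-1)`-forms, then `∫ χ(A) ∂_i f = 0` for every test function `f`: both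
`A (∂_i f) - χ(A) ∂_i f` and `d B` of a test form are divergences of compactly supported fields. -/
theorem chi_constant_of_lift {a : (Fin N → ℕ) → (Fin N → ℝ) → ℝ}
    (ha : ∀ I, Smooth (a I)) (hfin : {I | a I ≠ 0}.Finite) {M : ℕ → FormOpR N}
    (hM : ∀ s ε δ, IsPDO (M s ε δ))
    (hN : ∀ f : (Fin N → ℝ) → ℝ, Smooth f → ∀ δ x,
      applyFOR (M N) (fun ε => if ε = (fun _ => true) then f else 0) δ x =
        if δ = (fun _ => true) then ∑' I, a I x * PPow I f x else 0)
    (hd : ∀ s, s + 1 ≤ N → ∀ ω : FormR N, (∀ ε, Smooth (ω ε)) →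
      (∀ ε, wtR ε ≠ s → ω ε = 0) → ∀ δ x,
        dR (applyFOR (M s) ω) δ x = applyFOR (M (s + 1)) (dR ω) δ x) :
    ∃ c, ∀ x, chi a x = c := by
  obtain ⟨C, hC, hdiv⟩ := exists_division ha hfin
  refine constant_of_integral_pderiv (chi_smooth ha hfin) fun i f hf hc => ?_
  set ω : FormR N := fun ε => if ε = cotop i then f else 0 with hω
  have hωs : ∀ ε, Smooth (ω ε) := fun ε => by
    simp only [hω]; split_ifs; exacts [hf, smooth_zero]
  have hωc : ∀ ε, HasCompactSupport (ω ε) := fun ε => by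
    simp only [hω]; split_ifs; exacts [hc, HasCompactSupport.zero]
  -- the coefficient of the top form `dω`
  set g := (-1 : ℝ) ^ posR i (top N) • pderiv' i f with hg
  have hgs : Smooth g := smooth_smul _ (smooth_pderiv hf i)
  have hgc : HasCompactSupport g := (compactSupport_pderiv hf hc i).smul_left (f := fun _ => _)
  have hNpos : N - 1 + 1 = N := by have := i.2; omega
  have key : ∀ x, dR (applyFOR (M (N - 1)) ω) (top N) x
      = chi a x * g x + ∑ j, pderiv' j (C j g) x := by
    intro x
    rw [hd (N - 1) hNpos.le ω hωs (fun ε hε => ?_), hNpos, hω, dR_single]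
    · rw [← hdiv g hgs x]
      exact (hN g hgs (top N) x).trans (if_pos rfl)
    · have hne : ε ≠ cotop i := by
        rintro rfl
        have := wtR_cotop i
        omega
      simp [hω, hne]
  -- the vector field with divergence `χ g`: the components of the image of `ω`, with the signs of
  -- `d`, minus the field provided by division
  set B : Fin N → (Fin N → ℝ) → ℝ := fun k =>
    (-1 : ℝ) ^ posR k (top N) • applyFOR (M (N - 1)) ω (cotop k) - C k g with hB
  have hEs : ∀ k, Smooth (applyFOR (M (N - 1)) ω (cotop k)) := fun k => by
    rw [applyFOR_eq]
    exact smooth_sum _ fun ε _ => (hM _ _ _).smooth (hωs ε)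
  have hEc : ∀ k, HasCompactSupport (applyFOR (M (N - 1)) ω (cotop k)) := fun k => by
    rw [applyFOR_eq]
    exact compactSupport_sum _ fun ε _ => (hM _ _ _).compactSupport (hωs ε) (hωc ε)
  have hBs : ∀ k, Smooth (B k) := fun k =>
    ContDiff.sub (smooth_smul _ (hEs k)) ((hC k).smooth hgs)
  have hBc : ∀ k, HasCompactSupport (B k) := fun k => by
    have h1 : HasCompactSupport
        ((-1 : ℝ) ^ posR k (top N) • applyFOR (M (N - 1)) ω (cotop k)) :=
      (hEc k).smul_left (f := fun _ => _)
    exact h1.sub ((hC k).compactSupport hgs hgc)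
  have hchi : ∀ x, chi a x * g x = ∑ k, pderiv' k (B k) x := by
    intro x
    have h1 := key x
    rw [dR_top, Finset.sum_apply] at h1
    have h2 : ∀ k, pderiv' k (B k) x
        = (-1 : ℝ) ^ posR k (top N) * pderiv' k (applyFOR (M (N - 1)) ω (cotop k)) x
          - pderiv' k (C k g) x := by
      intro k
      have h3 : B k = (-1 : ℝ) ^ posR k (top N) • applyFOR (M (N - 1)) ω (cotop k)
          + (-1 : ℝ) • C k g := by
        simp only [hB]
        rw [neg_one_smul, sub_eq_add_neg]
      rw [h3, pderiv_add (smooth_smul _ (hEs k)) (smooth_smul _ ((hC k).smooth hgs)),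
        pderiv_smul, pderiv_smul]
      simp only [Pi.add_apply, Pi.smul_apply, smul_eq_mul]
      ring
    simp only [h2, Finset.sum_sub_distrib]
    simp only [Pi.smul_apply, smul_eq_mul] at h1
    linarith
  have hint : ∫ x, chi a x * g x = 0 := by
    simp only [hchi]
    rw [MeasureTheory.integral_finsetSum]
    · exact Finset.sum_eq_zero fun k _ => integral_pderiv_eq_zero (hBs k) (hBc k) k
    · exact fun k _ => (smooth_pderiv (hBs k) k).continuous.integrable_of_hasCompactSupport
        (compactSupport_pderiv (hBs k) (hBc k) k)
  have hpull : ∫ x, chi a x * g x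
      = (-1 : ℝ) ^ posR i (top N) * ∫ x, chi a x * pderiv' i f x := by
    rw [← MeasureTheory.integral_const_mul]
    congr 1
    funext x
    simp only [hg, Pi.smul_apply, smul_eq_mul]
    ring
  rw [hpull] at hint
  exact (mul_eq_zero.1 hint).resolve_left (pow_ne_zero _ (by norm_num))

/-- The `(ε, δ)` entry of the operator `η ↦ h (dη)` from `(N-1)`-forms to `(N-1)`-forms, where `h`
sends the top form with coefficient `f` to the `(N-1)`-form with components
`(-1)^{posR j top} C_j f`, so that `d h` has coefficient `Σ_j ∂_j (C_j f)`. -/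
noncomputable def homotopyEntry (C : Fin N → ((Fin N → ℝ) → ℝ) → ((Fin N → ℝ) → ℝ))
    (ε δ : Fin N → Bool) (f : (Fin N → ℝ) → ℝ) : (Fin N → ℝ) → ℝ :=
  ∑ j, ∑ i, if δ = cotop j ∧ ε = cotop i then
    ((-1 : ℝ) ^ posR j (top N) * (-1 : ℝ) ^ posR i (top N)) • C j (pderiv' i f) else 0

/-- The lift: `A` in degree `N`, `c + h d` in degree `N - 1`, and multiplication by `c` in all
other degrees. -/
noncomputable def liftOp (A : ((Fin N → ℝ) → ℝ) → ((Fin N → ℝ) → ℝ))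
    (C : Fin N → ((Fin N → ℝ) → ℝ) → ((Fin N → ℝ) → ℝ)) (c : ℝ) (s : ℕ) : FormOpR N :=
  fun ε δ f =>
    if s = N then (if ε = top N ∧ δ = top N then A f else 0)
    else (if ε = δ then c • f else 0) + if s + 1 = N then homotopyEntry C ε δ f else 0

variable {A : ((Fin N → ℝ) → ℝ) → ((Fin N → ℝ) → ℝ)}
  {C : Fin N → ((Fin N → ℝ) → ℝ) → ((Fin N → ℝ) → ℝ)} {c : ℝ}

theorem homotopyEntry_isPDO (hC : ∀ j, IsPDO (C j)) (ε δ : Fin N → Bool) :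
    IsPDO (homotopyEntry C ε δ) := by
  refine IsPDO.sum _ fun j _ => IsPDO.sum _ fun i _ => ?_
  by_cases h : δ = cotop j ∧ ε = cotop i
  · simp only [h, and_self, if_true]
    exact ((hC j).comp_pderiv i).smul _
  · simp only [h, if_false]
    exact IsPDO.zero

theorem liftOp_isPDO (hA : IsPDO A) (hC : ∀ j, IsPDO (C j)) (s : ℕ) (ε δ : Fin N → Bool) :
    IsPDO (liftOp A C c s ε δ) := by
  unfold liftOp
  by_cases hs : s = N
  · simp only [hs, if_true]
    split_ifs
    exacts [hA, IsPDO.zero]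
  · simp only [hs, if_false]
    refine IsPDO.add ?_ ?_
    · split_ifs
      exacts [IsPDO.id.smul c, IsPDO.zero]
    · split_ifs
      exacts [homotopyEntry_isPDO hC ε δ, IsPDO.zero]

theorem liftOp_top (ω : FormR N) (δ : Fin N → Bool) :
    applyFOR (liftOp A C c N) ω δ = if δ = top N then A (ω (top N)) else 0 := by
  rw [applyFOR_eq, Finset.sum_eq_single (top N)]
  · simp [liftOp]
  · intro ε _ hε
    simp [liftOp, hε]
  · simp

theorem liftOp_low {s : ℕ} (hs : s + 2 ≤ N) (ω : FormR N) (δ : Fin N → Bool) :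
    applyFOR (liftOp A C c s) ω δ = c • ω δ := by
  have h1 : s ≠ N := by omega
  have h2 : s + 1 ≠ N := by omega
  rw [applyFOR_eq]
  simp [liftOp, h1, h2]

theorem liftOp_mid (hC : ∀ j, IsPDO (C j)) {s : ℕ} (hs : s + 1 = N) {ω : FormR N}
    (hω : ∀ ε, Smooth (ω ε)) (δ : Fin N → Bool) :
    applyFOR (liftOp A C c s) ω δ = c • ω δ +
      ∑ j, if δ = cotop j then (-1 : ℝ) ^ posR j (top N) • C j (dR ω (top N)) else 0 := by
  have h1 : s ≠ N := by omega
  rw [applyFOR_eq]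
  simp only [liftOp, h1, hs, if_false, if_true, Finset.sum_add_distrib]
  congr 1
  · simp
  · simp only [homotopyEntry]
    rw [Finset.sum_comm]
    refine Finset.sum_congr rfl fun j _ => ?_
    by_cases hδ : δ = cotop j
    · simp only [hδ, true_and, if_true]
      rw [Finset.sum_comm, dR_top,
        (hC j).map_sum _ fun i _ => smooth_smul _ (smooth_pderiv (hω _) i), Finset.smul_sum]
      refine Finset.sum_congr rfl fun i _ => ?_
      rw [Finset.sum_eq_single (cotop i)]
      · rw [if_pos rfl, (hC j).map_smul (smooth_pderiv (hω _) i), smul_smul]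
      · intro ε _ hε
        rw [if_neg hε]
      · simp
    · simp [hδ]

theorem dR_smul (ω : FormR N) (c : ℝ) : dR (fun ε => c • ω ε) = fun δ => c • dR ω δ := by
  funext δ
  rw [dR_eq, dR_eq, Finset.smul_sum]
  refine Finset.sum_congr rfl fun i _ => ?_
  split_ifs
  · rw [pderiv_smul, smul_comm]
  · simp

theorem dR_add {ω η : FormR N} (hω : ∀ ε, Smooth (ω ε)) (hη : ∀ ε, Smooth (η ε)) :
    dR (fun ε => ω ε + η ε) = fun δ => dR ω δ + dR η δ := by
  funext δ
  rw [dR_eq, dR_eq, dR_eq, ← Finset.sum_add_distrib]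
  refine Finset.sum_congr rfl fun i _ => ?_
  split_ifs
  · rw [pderiv_add (hω _) (hη _), smul_add]
  · simp

/-- The exterior derivative of the `(N-1)`-form with components `± u_j` is the divergence of `u`
times the volume form. -/
theorem dR_divergence {u : Fin N → (Fin N → ℝ) → ℝ} (δ : Fin N → Bool) :
    dR (fun ε => ∑ j, if ε = cotop j then (-1 : ℝ) ^ posR j (top N) • u j else 0) δ
      = if δ = top N then ∑ j, pderiv' j (u j) else 0 := by
  rw [dR_eq]
  by_cases hδ : δ = top N
  · subst hδ
    rw [if_pos rfl]
    refine Finset.sum_congr rfl fun i _ => ?_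
    rw [if_pos (show top N i = true from rfl), Finset.sum_eq_single i]
    · rw [if_pos (show Function.update (top N) i false = cotop i from rfl), pderiv_smul, smul_smul,
        ← mul_pow]
      simp
    · intro j _ hj
      exact if_neg fun h => hj (update_eq_cotop rfl h).1.symm
    · simp
  · rw [if_neg hδ]
    refine Finset.sum_eq_zero fun k _ => ?_
    by_cases hk : δ k = true
    · rw [if_pos hk, Finset.sum_eq_zero, pderiv_zero, smul_zero]
      intro j _
      exact if_neg fun h => hδ (update_eq_cotop hk h).2
    · rw [if_neg hk]

theorem dR_eq_zero_of_degree {s : ℕ} {ω : FormR N} (hω : ∀ ε, wtR ε ≠ s → ω ε = 0)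
    {δ : Fin N → Bool} (hδ : wtR δ ≠ s + 1) : dR ω δ = 0 := by
  rw [dR_eq]
  refine Finset.sum_eq_zero fun i _ => ?_
  by_cases hi : δ i = true
  · have := wtR_update hi
    rw [if_pos hi, hω _ (by omega), pderiv_zero, smul_zero]
  · rw [if_neg hi]

/-- The lift commutes with `d`; in degree `N - 2` this uses `d ∘ d = 0`, and in degree `N - 1` the
division `A f = c f + Σ_j ∂_j (C_j f)`. -/
theorem liftOp_comm (hC : ∀ j, IsPDO (C j))
    (hdiv : ∀ f, Smooth f → A f = c • f + ∑ j, pderiv' j (C j f)) {s : ℕ} (hs : s + 1 ≤ N)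
    {ω : FormR N} (hω : ∀ ε, Smooth (ω ε)) (hdeg : ∀ ε, wtR ε ≠ s → ω ε = 0)
    (δ : Fin N → Bool) :
    dR (applyFOR (liftOp A C c s) ω) δ = applyFOR (liftOp A C c (s + 1)) (dR ω) δ := by
  rcases Nat.lt_or_ge (s + 1) N with h | h
  · have e : applyFOR (liftOp A C c s) ω = fun ε => c • ω ε := by
      funext ε
      exact liftOp_low h ω ε
    rw [e, dR_smul]
    rcases Nat.lt_or_ge (s + 2) N with h' | h'
    · rw [liftOp_low h']
    · rw [liftOp_mid hC (by omega) (dR_smooth hω), dR_dR hω]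
      simp [(hC _).map_zero]
  · have hsN : s + 1 = N := by omega
    have e : applyFOR (liftOp A C c s) ω = fun ε => c • ω ε +
        ∑ j, if ε = cotop j then (-1 : ℝ) ^ posR j (top N) • C j (dR ω (top N)) else 0 := by
      funext ε
      exact liftOp_mid hC hsN hω ε
    have hus : ∀ ε : Fin N → Bool, Smooth (∑ j, if ε = cotop j then
        (-1 : ℝ) ^ posR j (top N) • C j (dR ω (top N)) else 0) := by
      intro ε
      refine smooth_sum _ fun j _ => ?_
      split_ifs
      · exact smooth_smul _ ((hC j).smooth (dR_smooth hω _))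
      · exact smooth_zero
    rw [e, dR_add (fun ε => smooth_smul c (hω ε)) hus, dR_smul]
    beta_reduce
    rw [dR_divergence, hsN, liftOp_top]
    by_cases hδ : δ = top N
    · subst hδ
      rw [if_pos rfl, if_pos rfl, hdiv _ (dR_smooth hω _)]
    · rw [if_neg hδ, if_neg hδ, dR_eq_zero_of_degree hdeg]
      · simp
      · exact fun hw => hδ (eq_top_of_wtR (hw.trans hsN))

end Lifting

/-- A differential operator `A_N : Ω^N(ℝ^N) → Ω^N(ℝ^N)` (given by its
coefficient data `a`) lifts to a sequence of differential operators
`A_s : Ω^s(ℝ^N) → Ω^s(ℝ^N)` with `d ∘ A_s = A_{s+1} ∘ d` for `0 ≤ s ≤ N−1` if and only if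
the characteristic `χ(A_N) = Σ_I (−1)^{|I|} ∂^I a_I` is a constant function; moreover in
that case the lift can be chosen so that for `0 ≤ s ≤ N−2` the operator `A_s` is
multiplication by the constant `χ(A_N)`. -/
theorem lifting_deRham {N : ℕ} (a : (Fin N → ℕ) → (Fin N → ℝ) → ℝ)
    (ha : ∀ I, ContDiff ℝ (⊤ : ℕ∞) (a I)) (hfin : {I | a I ≠ 0}.Finite) :
    ((∃ M : ℕ → FormOpR N,
        (∀ s ε δ, IsPDO (M s ε δ)) ∧
        (∀ f : (Fin N → ℝ) → ℝ, ContDiff ℝ (⊤ : ℕ∞) f → ∀ δ x,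
          applyFOR (M N) (fun ε => if ε = (fun _ => true) then f else 0) δ x =
            if δ = (fun _ => true) then ∑' I, a I x * PPow I f x else 0) ∧
        (∀ s, s + 1 ≤ N → ∀ ω : FormR N, (∀ ε, ContDiff ℝ (⊤ : ℕ∞) (ω ε)) →
          (∀ ε, wtR ε ≠ s → ω ε = 0) → ∀ δ x,
            dR (applyFOR (M s) ω) δ x = applyFOR (M (s + 1)) (dR ω) δ x)) ↔
      (∃ c : ℝ, ∀ x, ∑' I, (-1 : ℝ) ^ (∑ t, I t) * PPow I (a I) x = c)) ∧
    (∀ c : ℝ, (∀ x, ∑' I, (-1 : ℝ) ^ (∑ t, I t) * PPow I (a I) x = c) →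
      ∃ M : ℕ → FormOpR N,
        (∀ s ε δ, IsPDO (M s ε δ)) ∧
        (∀ f : (Fin N → ℝ) → ℝ, ContDiff ℝ (⊤ : ℕ∞) f → ∀ δ x,
          applyFOR (M N) (fun ε => if ε = (fun _ => true) then f else 0) δ x =
            if δ = (fun _ => true) then ∑' I, a I x * PPow I f x else 0) ∧
        (∀ s, s + 1 ≤ N → ∀ ω : FormR N, (∀ ε, ContDiff ℝ (⊤ : ℕ∞) (ω ε)) →
          (∀ ε, wtR ε ≠ s → ω ε = 0) → ∀ δ x,
            dR (applyFOR (M s) ω) δ x = applyFOR (M (s + 1)) (dR ω) δ x) ∧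
        (∀ s, s + 2 ≤ N → ∀ ω : FormR N,
          (∀ ε, wtR ε ≠ s → ω ε = 0) → ∀ δ x,
            applyFOR (M s) ω δ x = c * ω δ x)) := by
  have hlift : ∀ c : ℝ, (∀ x, ∑' I, (-1 : ℝ) ^ (∑ t, I t) * PPow I (a I) x = c) →
      ∃ M : ℕ → FormOpR N,
        (∀ s ε δ, IsPDO (M s ε δ)) ∧
        (∀ f : (Fin N → ℝ) → ℝ, ContDiff ℝ (⊤ : ℕ∞) f → ∀ δ x,
          applyFOR (M N) (fun ε => if ε = (fun _ => true) then f else 0) δ x =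
            if δ = (fun _ => true) then ∑' I, a I x * PPow I f x else 0) ∧
        (∀ s, s + 1 ≤ N → ∀ ω : FormR N, (∀ ε, ContDiff ℝ (⊤ : ℕ∞) (ω ε)) →
          (∀ ε, wtR ε ≠ s → ω ε = 0) → ∀ δ x,
            dR (applyFOR (M s) ω) δ x = applyFOR (M (s + 1)) (dR ω) δ x) ∧
        (∀ s, s + 2 ≤ N → ∀ ω : FormR N,
          (∀ ε, wtR ε ≠ s → ω ε = 0) → ∀ δ x,
            applyFOR (M s) ω δ x = c * ω δ x) := by
    intro c hc
    obtain ⟨C, hC, hdiv⟩ := exists_division ha hfin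
    set A : ((Fin N → ℝ) → ℝ) → ((Fin N → ℝ) → ℝ) := fun f x => ∑' I, a I x * PPow I f x with hAdef
    have hA : IsPDO A := ⟨a, ha, hfin, fun f _ x => rfl⟩
    have hdiv' : ∀ f, Smooth f → A f = c • f + ∑ j, pderiv' j (C j f) := by
      intro f hf
      funext x
      have h := hdiv f hf x
      rw [show chi a x = c from hc x] at h
      simpa [Finset.sum_apply] using h
    refine ⟨liftOp A C c, liftOp_isPDO hA hC, fun f _ δ x => ?_, fun s hs ω hω hdeg δ x => ?_,
      fun s hs ω _ δ x => ?_⟩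
    · rw [liftOp_top]
      have e : (fun _ => true : Fin N → Bool) = top N := rfl
      rw [e, if_pos rfl]
      split_ifs <;> rfl
    · rw [liftOp_comm hC hdiv' hs hω hdeg]
    · rw [liftOp_low hs]
      rfl
  refine ⟨⟨?_, ?_⟩, hlift⟩
  · rintro ⟨M, hM, hN, hd⟩
    exact chi_constant_of_lift ha hfin hM hN hd
  · rintro ⟨c, hc⟩
    obtain ⟨M, hM, hN, hd, -⟩ := hlift c hc
    exact ⟨M, hM, hN, hd⟩

end PDO
end

section
/- A local differential operator A_N : Ω^{N,0} → Ω^{N,0} can be lifted to a sequence of local differential operators {A_s : Ω^{s,0} → Ω^{s,0}}_{0≤s≤N} with d_H∘A_s = A_{s+1}∘d_H for 0 ≤ s ≤ N−1 if and only if χ(A_N ∘ d/dx^i) = 0 for all 1 ≤ i ≤ N; moreover, in that case the lift can be chosen so that for 0 ≤ s ≤ N−2 the operator A_s acts diagonally by A_s(f (dx)^ε) = (χ(A_N)f)(dx)^ε. -/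
/-!
Local functions form an algebra `Loc N` with commuting derivations `∂/∂u_J` (`PE`) and `d/dx^i`
(`DE`) subject to `[∂/∂u_{iK}, d/dx^i] = ∂/∂u_K`. A local differential operator
`A = Σ_{I,α} p_{I,α} (d/dx)^I (∂/∂u)^α` is recorded by its coefficients `Dat N`, which it determines:
the test functions `e^{ξ·x} u^α` separate them (`Real'_injective`). Composition with `d/dx^i` on
either side becomes an explicit operation on coefficients (`lDat`, `rDat`), and two facts carry the
proof.

* The commutator of the characteristic with a total derivative is `χ(A) ∘ d/dx^i - d/dx^i ∘ χ(A) =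
  χ(A ∘ d/dx^i)` (`rDat_chiDat`). Hence `χ(A)` commutes with all `d/dx^i`, and so acts diagonally as
  a chain map, as soon as all `χ(A ∘ d/dx^i)` vanish (`chi_comm`, `dL_comm`).
* Integration by parts: `A = χ(A) + Σ_j d/dx^j ∘ B_j` for some local differential operators `B_j`
  (`exists_parts`), while `χ(d/dx^j ∘ B) = 0` for all `B` (`chiDat_lDat`).

For the existence of a lift, `A_s` is the diagonal `χ(A)` in degrees `s ≤ N - 2`, and `χ(A)` plus
the correction `± B_j ∘ d/dx^i` from the `i`-th to the `j`-th face in degree `N - 1`, where the `i`-th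
face is the multidegree of the volume form with `dx^i` removed. The coefficient of the correction at
the `j`-th face is `± B_j` applied to `d_H ω`, so it accounts for `A - χ(A)` in top degree, and it vanishes on exact forms
because `d_H ∘ d_H = 0` (`dL_lift`).

Conversely, applying `d_H ∘ A_{N-1} = A_N ∘ d_H` to forms supported on the `i`-th face exhibits
`A ∘ d/dx^i` as a signed sum of operators `d/dx^k ∘ B`, whose characteristic vanishes
(`chi_eq_zero_of_lift`).
-/

open scoped BigOperators

namespace JetBundle

/-- Multi-indices `J = (j_1,…,j_N)`. -/
abbrev MI (N : ℕ) := Fin N → ℕ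

/-- A point of the infinite jet bundle `J^∞E`, with coordinates `(x^i, u_J)`. -/
abbrev JetPt (N : ℕ) := (Fin N → ℝ) × (MI N → ℝ)

/-- Real-valued functions on the infinite jet bundle. -/
abbrev Fn (N : ℕ) := JetPt N → ℝ

/-- Partial derivative with respect to the base coordinate `x^i`. -/
noncomputable def pderivX {N : ℕ} (i : Fin N) (f : Fn N) : Fn N :=
  fun p => deriv (fun t => f (Function.update p.1 i t, p.2)) (p.1 i)

/-- Partial derivative with respect to the jet coordinate `u_J`. -/
noncomputable def pderivU {N : ℕ} (J : MI N) (f : Fn N) : Fn N :=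
  fun p => deriv (fun t => f (p.1, Function.update p.2 J t)) (p.2 J)

/-- `iJ` : the multi-index `J` with its `i`-th entry increased by `1`. -/
def inc {N : ℕ} (i : Fin N) (J : MI N) : MI N := Function.update J i (J i + 1)

/-- The total derivative `d/dx^i = ∂/∂x^i + Σ_J u_{iJ} ∂/∂u_J`. -/
noncomputable def Dtot {N : ℕ} (i : Fin N) (f : Fn N) : Fn N :=
  fun p => pderivX i f p + ∑' J : MI N, p.2 (inc i J) * pderivU J f p

/-- Iterated total derivative `(d/dx)^I`. -/
noncomputable def DPow {N : ℕ} (I : MI N) : Fn N → Fn N :=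
  (List.finRange N).foldr (fun i g => (Dtot i)^[I i] ∘ g) id

/-- Iterated vertical derivative `(∂/∂u)^α` for a finitely supported exponent `α`. -/
noncomputable def UPow {N : ℕ} (α : MI N →₀ ℕ) : Fn N → Fn N :=
  α.support.toList.foldr (fun J g => (pderivU J)^[α J] ∘ g) id

/-- A local function: a smooth function of the base coordinates and
finitely many jet coordinates `u_J`. -/
def IsLocal {N : ℕ} (f : Fn N) : Prop :=
  ∃ (S : Finset (MI N)) (g : ((Fin N → ℝ) × (↥S → ℝ)) → ℝ),
    ContDiff ℝ (⊤ : ℕ∞) g ∧ ∀ p : JetPt N, f p = g (p.1, fun J => p.2 J.1)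

/-- The formal differential degree of an exponent `α`: the maximal `|J|` with `α J ≠ 0`. -/
def degf {N : ℕ} (α : MI N →₀ ℕ) : ℕ := α.support.sup fun J => ∑ i, J i

/-- Index type for the coefficients of an `n`-multilinear local differential operator:
a tuple of multi-indices `(I_1,…,I_n)` and vertical exponents `(α_1,…,α_n)`. -/
abbrev Idx (N n : ℕ) := (Fin n → MI N) × (Fin n → (MI N →₀ ℕ))

/-- Coefficient data of an `n`-multilinear local differential operator. -/
abbrev OpData (N n : ℕ) := Idx N n → Fn N

/-- `n`-multilinear operators on functions on the jet bundle. -/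
abbrev Op (N n : ℕ) := (Fin n → Fn N) → Fn N

/-- An `n`-tuple of local functions. -/
def LocalTuple {N n : ℕ} (f : Fin n → Fn N) : Prop := ∀ j, IsLocal (f j)

/-- Coefficient data is admissible if all coefficients are local functions and, for each `m`,
only finitely many coefficients with `Σ_j deg_f(α_j) ≤ m` are nonzero. -/
def Good {N n : ℕ} (q : OpData N n) : Prop :=
  (∀ Iα, IsLocal (q Iα)) ∧
    ∀ m : ℕ, {Iα : Idx N n | q Iα ≠ 0 ∧ ∑ j, degf (Iα.2 j) ≤ m}.Finite

/-- The (unpolarized) realization of coefficient data: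
`A(f_1,…,f_n) = Σ p_{I,α} Π_j (d/dx)^{I_j} (∂/∂u)^{α_j} f_j`. -/
noncomputable def realizeU {N n : ℕ} (q : OpData N n) (f : Fin n → Fn N) : Fn N :=
  fun pt => ∑' Iα : Idx N n, q Iα pt * ∏ j, DPow (Iα.1 j) (UPow (Iα.2 j) (f j)) pt

/-- The polarized realization of coefficient data: the slot `I_1` records powers of
`d/dy_1 = Σ_j d/dx_j`, i.e. total derivatives applied to the whole product, while for `j ≥ 2`
the slot `I_j` records powers of `d/dy_j = d/dx_j` acting on the `j`-th argument:
`A(f_1,…,f_n) = Σ q_{I;α} (d/dx)^{I_1} [ (∂/∂u)^{α_1}f_1 · Π_{j≥2} (d/dx)^{I_j}(∂/∂u)^{α_j} f_j ]`. -/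
noncomputable def realizeP {N n : ℕ} [NeZero n] (q : OpData N n) (f : Fin n → Fn N) : Fn N :=
  fun pt => ∑' Iα : Idx N n, q Iα pt *
    DPow (Iα.1 0) (fun p => ∏ j,
      if j = (0 : Fin n) then UPow (Iα.2 j) (f j) p
      else DPow (Iα.1 j) (UPow (Iα.2 j) (f j)) p) pt

/-- The characteristic, on polarized coefficient data:
`χ(q)_{(0,I_2,…,I_n);α} := Σ_{I_1} (−1)^{|I_1|} (d/dx)^{I_1} q_{I_1,I_2,…,I_n;α}`. -/
noncomputable def chiData {N n : ℕ} [NeZero n] (q : OpData N n) : OpData N n :=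
  fun Iα =>
    if Iα.1 0 = 0 then
      fun pt => ∑' K : MI N,
        (-1 : ℝ) ^ (∑ i, K i) * DPow K (q (Function.update Iα.1 0 K, Iα.2)) pt
    else 0

/-- `q` is a polarized presentation of the operator `A` (on local functions). -/
def Presents {N n : ℕ} [NeZero n] (q : OpData N n) (A : Op N n) : Prop :=
  ∀ f, LocalTuple f → ∀ pt, A f pt = realizeP q f pt

/-- `A` is an `n`-multilinear local differential operator (unpolarized form). -/
def IsLDO {N n : ℕ} (A : Op N n) : Prop :=
  ∃ q : OpData N n, Good q ∧ ∀ f, LocalTuple f → ∀ pt, A f pt = realizeU q f pt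

/-- `A` is an `n`-multilinear local differential operator, given by a polarized presentation. -/
def IsPLDO {N n : ℕ} [NeZero n] (A : Op N n) : Prop :=
  ∃ q : OpData N n, Good q ∧ Presents q A

/-- `A` is an `n`-multilinear local differential operator with vanishing characteristic. -/
def ChiZero {N n : ℕ} [NeZero n] (A : Op N n) : Prop :=
  ∃ q : OpData N n, Good q ∧ Presents q A ∧
    ∀ f, LocalTuple f → ∀ pt, realizeP (chiData q) f pt = 0

/-- Precomposition `A ∘ d/dx^i_j` with the total derivative acting on the `j`-th argument. -/
noncomputable def precompD {N n : ℕ} (A : Op N n) (i : Fin N) (j : Fin n) : Op N n :=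
  fun f => A (Function.update f j (Dtot i (f j)))

/-- A horizontal form, recorded by its coefficients on the basis
`(dx)^ε = (dx^1)^{ε^1} ∧ ⋯ ∧ (dx^N)^{ε^N}`, `ε : Fin N → Bool`. -/
abbrev Form (N : ℕ) := (Fin N → Bool) → Fn N

/-- The form-degree `|ε|`. -/
def wt {N : ℕ} (ε : Fin N → Bool) : ℕ := ∑ i, if ε i then 1 else 0

/-- The sign exponent: the number of entries of `ε` below `i` which are set. -/
def pos {N : ℕ} (i : Fin N) (ε : Fin N → Bool) : ℕ := ∑ l, if l < i ∧ ε l then 1 else 0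

/-- The horizontal differential `d_H ω = Σ_i dx^i ∧ (d/dx^i) ω`. -/
noncomputable def dH {N : ℕ} (ω : Form N) : Form N :=
  fun δ pt => ∑ i : Fin N,
    if δ i then (-1 : ℝ) ^ pos i δ * Dtot i (ω (Function.update δ i false)) pt else 0

/-- A matrix of operators acting on horizontal forms (linear case). -/
abbrev FormOp (N : ℕ) := (Fin N → Bool) → (Fin N → Bool) → (Fn N → Fn N)

/-- Application of a matrix of operators to a form. -/
noncomputable def applyFO {N : ℕ} (M : FormOp N) (ω : Form N) : Form N :=
  fun δ pt => ∑ ε : Fin N → Bool, M ε δ (ω ε) pt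

/-- A degree element of `DEnd(n)`: a matrix indexed by basis multidegrees of the inputs
`(ε_1,…,ε_n)` and of the output `δ`, with `n`-multilinear operator entries. -/
abbrev DMat (N n : ℕ) := (Fin n → (Fin N → Bool)) → (Fin N → Bool) → Op N n

/-- All matrix entries are local differential operators. -/
def LDOMat {N n : ℕ} [NeZero n] (F : DMat N n) : Prop := ∀ εs δ, IsPLDO (F εs δ)

/-- `F` represents a degree-`k` map of the regraded horizontal complexes
(`Ω_i := Ω^{N−i,0}`): the entry at `(ε⃗, δ)` vanishes unless
`N − wt δ = k + Σ_j (N − wt ε_j)`. -/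
def GradedMat {N n : ℕ} (k : ℤ) (F : DMat N n) : Prop :=
  ∀ εs δ, F εs δ ≠ 0 → (wt δ : ℤ) = (N : ℤ) - k - ∑ j, ((N : ℤ) - (wt (εs j) : ℤ))

/-- The differential `(δf)_s = d_H f_s − (−1)^k f_{s−1} d_H^{⊗n}` of the complex `DEnd_*(n)`,
written out on matrix entries. -/
noncomputable def deltaMat {N n : ℕ} (k : ℤ) (F : DMat N n) : DMat N n :=
  fun εs δ g =>
    (fun pt => ∑ i : Fin N,
      if δ i then (-1 : ℝ) ^ pos i δ * Dtot i (F εs (Function.update δ i false) g) pt else 0)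
    -
    ((-1 : ℝ) ^ k) • (fun pt => ∑ j : Fin n, ∑ i : Fin N,
      if εs j i = false then
        (-1 : ℝ) ^ ((∑ l ∈ Finset.univ.filter fun l => l < j, wt (εs l)) + pos i (εs j)) *
          F (Function.update εs j (Function.update (εs j) i true)) δ
            (Function.update g j (Dtot i (g j))) pt
      else 0)

/-- A matrix of operators vanishes (on local arguments). -/
def MatZeroLoc {N n : ℕ} (F : DMat N n) : Prop :=
  ∀ εs δ g, LocalTuple g → ∀ pt, F εs δ g pt = 0

/-- Two matrices of operators agree (on local arguments). -/
def MatEqLoc {N n : ℕ} (F G : DMat N n) : Prop :=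
  ∀ εs δ g, LocalTuple g → ∀ pt, F εs δ g pt = G εs δ g pt

/-- The projection `B_0 : DEnd_0(n) → LDO(n)`, i.e. the component `f_0` on the identifications
`[(Ω_*)^{⊗n}]_0 ≅ Loc(E)^{⊗n}`, `Ω_0 ≅ Loc(E)`. -/
def B0 {N n : ℕ} (F : DMat N n) : Op N n := F (fun _ _ => true) fun _ => true

/-- A form with coefficients in `LDO(n)`: an element of the operator complex `O^*(n)`. -/
abbrev OForm (N n : ℕ) := (Fin N → Bool) → Op N n

/-- The differential of the operator complex: `d(A (dx)^ε) = Σ_i (d/dx^i ∘ A) dx^i ∧ (dx)^ε`. -/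
noncomputable def dO {N n : ℕ} (ω : OForm N n) : OForm N n :=
  fun δ g pt => ∑ i : Fin N,
    if δ i then (-1 : ℝ) ^ pos i δ * Dtot i (ω (Function.update δ i false) g) pt else 0

/-- An element of `O^*(n)` concentrated in degree `k`. -/
def OGraded {N n : ℕ} (k : ℕ) (ω : OForm N n) : Prop := ∀ δ, ω δ ≠ 0 → wt δ = k

/-- All coefficients are local differential operators. -/
def OLDO {N n : ℕ} [NeZero n] (ω : OForm N n) : Prop := ∀ δ, IsPLDO (ω δ)

/-- An element of `O^*(n)` vanishes on local arguments. -/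
def OZeroLoc {N n : ℕ} (ω : OForm N n) : Prop :=
  ∀ δ g, LocalTuple g → ∀ pt, ω δ g pt = 0

/-- Two elements of `O^*(n)` agree on local arguments. -/
def OEqLoc {N n : ℕ} (ω η : OForm N n) : Prop :=
  ∀ δ g, LocalTuple g → ∀ pt, ω δ g pt = η δ g pt

/-- The Euler operator `E(L dx^1∧⋯∧dx^N) = Σ_I (−1)^{|I|} (d/dx)^I (∂L/∂u_I)`. -/
noncomputable def Euler {N : ℕ} (L : Fn N) : Fn N :=
  fun pt => ∑' I : MI N, (-1 : ℝ) ^ (∑ i, I i) * DPow I (pderivU I L) pt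

end JetBundle
namespace JetBundle

/-! ### Local functions and their partial derivatives -/

section LocalFunctions

open scoped ContDiff

variable {N : ℕ}

/-- The projection of the jet bundle to the base coordinates and the `u_J` with `J ∈ S`. -/
def res (S : Finset (MI N)) (p : JetPt N) : (Fin N → ℝ) × (↥S → ℝ) := (p.1, fun J => p.2 J.1)

/-- `f` is a smooth function of the base coordinates and of the `u_J` with `J ∈ S`. -/
def Dep (S : Finset (MI N)) (f : Fn N) : Prop :=
  ∃ g : ((Fin N → ℝ) × (↥S → ℝ)) → ℝ, ContDiff ℝ ∞ g ∧ ∀ p, f p = g (res S p)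

theorem isLocal_iff (f : Fn N) : IsLocal f ↔ ∃ S, Dep S f := Iff.rfl

theorem Dep.mono {S T : Finset (MI N)} (h : S ⊆ T) {f : Fn N} (hf : Dep S f) : Dep T f := by
  obtain ⟨g, hg, hfg⟩ := hf
  refine ⟨fun z => g (z.1, fun J => z.2 ⟨J.1, h J.2⟩), ?_, fun p => hfg p⟩
  refine hg.comp ?_
  refine contDiff_fst.prodMk (contDiff_pi.2 fun J => ?_)
  exact (contDiff_apply ℝ ℝ (⟨J.1, h J.2⟩ : ↥T)).comp contDiff_snd

theorem exists_dep₂ {f g : Fn N} (hf : IsLocal f) (hg : IsLocal g) :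
    ∃ S, Dep S f ∧ Dep S g := by
  classical
  obtain ⟨S, hS⟩ := (isLocal_iff f).1 hf
  obtain ⟨T, hT⟩ := (isLocal_iff g).1 hg
  exact ⟨S ∪ T, hS.mono Finset.subset_union_left, hT.mono Finset.subset_union_right⟩

/-- The value of a coordinate: `inl i` stands for `x^i` and `inr J` for `u_J`. -/
def coord (c : Fin N ⊕ MI N) (p : JetPt N) : ℝ := Sum.elim p.1 p.2 c

/-- Replacement of the value of one coordinate. -/
noncomputable def upd (c : Fin N ⊕ MI N) (p : JetPt N) (t : ℝ) : JetPt N :=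
  Sum.elim (fun i => (Function.update p.1 i t, p.2)) (fun J => (p.1, Function.update p.2 J t)) c

/-- Partial derivative in any coordinate; a common name for `pderivX` and `pderivU`. -/
noncomputable def pd (c : Fin N ⊕ MI N) (f : Fn N) : Fn N :=
  fun p => deriv (fun t => f (upd c p t)) (coord c p)

theorem upd_coord (c : Fin N ⊕ MI N) (p : JetPt N) : upd c p (coord c p) = p := by
  rcases c with i | J <;> simp [upd, coord]

/-- The coordinate direction `c`, projected to the coordinates in `S`. -/
noncomputable def dvec (S : Finset (MI N)) (c : Fin N ⊕ MI N) : (Fin N → ℝ) × (↥S → ℝ) :=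
  Sum.elim (fun i => (Pi.single i 1, 0)) (fun J => (0, fun K => if K.1 = J then 1 else 0)) c

theorem hasDerivAt_res (S : Finset (MI N)) (c : Fin N ⊕ MI N) (p : JetPt N) (t : ℝ) :
    HasDerivAt (fun t => res S (upd c p t)) (dvec S c) t := by
  rcases c with i | J
  · exact (hasDerivAt_update p.1 i t).prodMk
      (hasDerivAt_const t (fun K : ↥S => p.2 K.1))
  · refine (hasDerivAt_const t p.1).prodMk (hasDerivAt_pi.2 fun K => ?_)
    by_cases h : K.1 = J
    · simpa [h, upd, Function.update_self] using hasDerivAt_id' t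
    · simpa [h, upd, Function.update_of_ne] using hasDerivAt_const t (p.2 K.1)

theorem hasDerivAt_comp_res {S : Finset (MI N)} {g : ((Fin N → ℝ) × (↥S → ℝ)) → ℝ}
    (hg : ContDiff ℝ ∞ g) (c : Fin N ⊕ MI N) (p : JetPt N) :
    HasDerivAt (fun t => g (res S (upd c p t))) (fderiv ℝ g (res S p) (dvec S c))
      (coord c p) := by
  have h1 : HasFDerivAt g (fderiv ℝ g (res S p)) (res S (upd c p (coord c p))) := by
    rw [upd_coord]
    exact (hg.differentiable (by simp) _).hasFDerivAt
  exact h1.comp_hasDerivAt _ (hasDerivAt_res S c p _)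

theorem pd_eq {S : Finset (MI N)} {g : ((Fin N → ℝ) × (↥S → ℝ)) → ℝ} {f : Fn N}
    (hg : ContDiff ℝ ∞ g) (hf : ∀ p, f p = g (res S p)) (c : Fin N ⊕ MI N) (p : JetPt N) :
    pd c f p = fderiv ℝ g (res S p) (dvec S c) := by
  obtain rfl : f = fun p => g (res S p) := funext hf
  exact (hasDerivAt_comp_res hg c p).deriv

theorem contDiff_dir {S : Finset (MI N)} {g : ((Fin N → ℝ) × (↥S → ℝ)) → ℝ}
    (hg : ContDiff ℝ ∞ g) (v : (Fin N → ℝ) × (↥S → ℝ)) :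
    ContDiff ℝ ∞ fun z => fderiv ℝ g z v :=
  (hg.fderiv_right (m := ∞) (by simp)).clm_apply contDiff_const

theorem Dep.pd {S : Finset (MI N)} {f : Fn N} (hf : Dep S f) (c : Fin N ⊕ MI N) :
    Dep S (pd c f) := by
  obtain ⟨g, hg, hfg⟩ := hf
  exact ⟨_, contDiff_dir hg (dvec S c), pd_eq hg hfg c⟩

theorem IsLocal.pd {f : Fn N} (hf : IsLocal f) (c : Fin N ⊕ MI N) : IsLocal (pd c f) := by
  obtain ⟨S, hS⟩ := (isLocal_iff f).1 hf
  exact ⟨S, hS.pd c⟩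

/-- Symmetry of second derivatives. -/
theorem pd_comm {f : Fn N} (hf : IsLocal f) (c d : Fin N ⊕ MI N) :
    pd c (pd d f) = pd d (pd c f) := by
  obtain ⟨S, g, hg, hfg⟩ := hf
  funext p
  rw [pd_eq (contDiff_dir hg (dvec S d)) (pd_eq hg hfg d),
    pd_eq (contDiff_dir hg (dvec S c)) (pd_eq hg hfg c)]
  have hd : DifferentiableAt ℝ (fderiv ℝ g) (res S p) :=
    ((hg.fderiv_right (m := ∞) (by simp)).differentiable (by simp)) _
  have key : ∀ v w, fderiv ℝ (fun z => fderiv ℝ g z v) (res S p) w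
      = fderiv ℝ (fderiv ℝ g) (res S p) w v := by
    intro v w
    rw [fderiv_clm_apply hd (differentiableAt_const v)]
    simp
  rw [key, key]
  exact (hg.contDiffAt.isSymmSndFDerivAt
    (by simpa using WithTop.coe_le_coe.2 (le_top : (2 : ℕ∞) ≤ ⊤))).eq _ _

theorem pd_eq_zero {S : Finset (MI N)} {f : Fn N} (hf : Dep S f) {J : MI N} (hJ : J ∉ S) :
    pd (Sum.inr J) f = 0 := by
  obtain ⟨g, hg, hfg⟩ := hf
  funext p
  rw [pd_eq hg hfg]
  have : dvec S (Sum.inr J) = 0 := by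
    refine Prod.ext rfl (funext fun K => ?_)
    have : K.1 ≠ J := fun h => hJ (h ▸ K.2)
    simp [dvec, this]
  simp [this]

theorem IsLocal.differentiableAt {f : Fn N} (hf : IsLocal f) (c : Fin N ⊕ MI N) (p : JetPt N) :
    DifferentiableAt ℝ (fun t => f (upd c p t)) (coord c p) := by
  obtain ⟨S, g, hg, hfg⟩ := hf
  obtain rfl : f = fun p => g (res S p) := funext hfg
  exact (hasDerivAt_comp_res hg c p).differentiableAt

theorem isLocal_const (r : ℝ) : IsLocal (fun _ : JetPt N => r) :=
  ⟨∅, fun _ => r, contDiff_const, fun _ => rfl⟩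

theorem IsLocal.add {f g : Fn N} (hf : IsLocal f) (hg : IsLocal g) : IsLocal (f + g) := by
  obtain ⟨S, ⟨a, ha, hfa⟩, ⟨b, hb, hgb⟩⟩ := exists_dep₂ hf hg
  exact ⟨S, fun z => a z + b z, ha.add hb, fun p => congrArg₂ (· + ·) (hfa p) (hgb p)⟩

theorem IsLocal.mul {f g : Fn N} (hf : IsLocal f) (hg : IsLocal g) : IsLocal (f * g) := by
  obtain ⟨S, ⟨a, ha, hfa⟩, ⟨b, hb, hgb⟩⟩ := exists_dep₂ hf hg
  exact ⟨S, fun z => a z * b z, ha.mul hb, fun p => congrArg₂ (· * ·) (hfa p) (hgb p)⟩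

variable (N) in
/-- The algebra `Loc(E)` of local functions, as a subalgebra of all functions on the jet bundle. -/
def Loc : Subalgebra ℝ (Fn N) where
  carrier := {f | IsLocal f}
  mul_mem' := IsLocal.mul
  add_mem' := IsLocal.add
  algebraMap_mem' r := isLocal_const r

/-- The jet coordinate `u_J`. -/
def U (J : MI N) : Loc N :=
  ⟨fun p => p.2 J, {J}, fun z => z.2 ⟨J, by simp⟩,
    (contDiff_apply ℝ ℝ (⟨J, by simp⟩ : ↥({J} : Finset (MI N)))).comp contDiff_snd, fun _ => rfl⟩

/-- The partial derivatives, as derivations of `Loc(E)`. -/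
noncomputable def pdL (c : Fin N ⊕ MI N) : Derivation ℝ (Loc N) (Loc N) :=
  Derivation.mk'
    { toFun := fun f => ⟨pd c f.1, IsLocal.pd f.2 c⟩
      map_add' := fun f g => Subtype.ext <| funext fun p =>
        deriv_add (IsLocal.differentiableAt f.2 c p) (IsLocal.differentiableAt g.2 c p)
      map_smul' := fun r f => Subtype.ext <| funext fun p =>
        deriv_const_mul r (IsLocal.differentiableAt f.2 c p) }
    (fun f g => Subtype.ext <| funext fun p => by
      have h := deriv_mul (IsLocal.differentiableAt f.2 c p) (IsLocal.differentiableAt g.2 c p)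
      simp only [upd_coord] at h
      refine h.trans ?_
      change _ = f.1 p * pd c g.1 p + g.1 p * pd c f.1 p
      simp only [pd]
      ring)

theorem pdL_coe (c : Fin N ⊕ MI N) (f : Loc N) : (pdL c f : Fn N) = pd c f := rfl

theorem pdL_comm (c d : Fin N ⊕ MI N) (f : Loc N) : pdL c (pdL d f) = pdL d (pdL c f) :=
  Subtype.ext (pd_comm f.2 c d)

/-- A local function has only finitely many non-zero vertical derivatives. -/
theorem exists_finset (f : Loc N) : ∃ S : Finset (MI N), ∀ J ∉ S, pdL (Sum.inr J) f = 0 := by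
  obtain ⟨S, hS⟩ := (isLocal_iff f.1).1 f.2
  exact ⟨S, fun J hJ => Subtype.ext (pd_eq_zero hS hJ)⟩

theorem pdL_U (c : Fin N ⊕ MI N) (J : MI N) :
    pdL c (U J) = if c = Sum.inr J then 1 else 0 := by
  refine Subtype.ext (funext fun p => ?_)
  rw [pdL_coe]
  rcases c with i | K
  · simp [pd, upd, U]
  · by_cases h : K = J
    · subst h
      simp [pd, upd, U, coord]
    · simp [pd, upd, U, h, Function.update_of_ne (Ne.symm h)]

/-- On a local function the infinite sum defining `d/dx^i` is a finite one. -/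
theorem Dtot_apply (i : Fin N) (f : Loc N) (S : Finset (MI N))
    (hS : ∀ J ∉ S, pdL (Sum.inr J) f = 0) :
    Dtot i f = ((pdL (Sum.inl i) f + ∑ J ∈ S, U (inc i J) * pdL (Sum.inr J) f : Loc N) : Fn N) := by
  funext p
  have h : ∑' J : MI N, p.2 (inc i J) * pderivU J f.1 p
      = ∑ J ∈ S, p.2 (inc i J) * pderivU J f.1 p := by
    refine tsum_eq_sum fun J hJ => ?_
    have : pderivU J f.1 p = 0 := congrFun (congrArg Subtype.val (hS J hJ)) p
    rw [this, mul_zero]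
  rw [Dtot, h]
  push_cast
  rw [Pi.add_apply, Finset.sum_apply]
  rfl

theorem IsLocal.Dtot {f : Fn N} (hf : IsLocal f) (i : Fin N) : IsLocal (Dtot i f) := by
  obtain ⟨S, hS⟩ := exists_finset ⟨f, hf⟩
  rw [Dtot_apply i ⟨f, hf⟩ S hS]
  exact Subtype.property _

theorem exists_finset₂ (f g : Loc N) : ∃ S : Finset (MI N),
    (∀ J ∉ S, pdL (Sum.inr J) f = 0) ∧ ∀ J ∉ S, pdL (Sum.inr J) g = 0 := by
  classical
  obtain ⟨S, hS⟩ := exists_finset f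
  obtain ⟨T, hT⟩ := exists_finset g
  refine ⟨S ∪ T, fun J hJ => hS J ?_, fun J hJ => hT J ?_⟩ <;> simp_all

/-- The total derivative `d/dx^i`, as a derivation of `Loc(E)`. -/
noncomputable def DL (i : Fin N) : Derivation ℝ (Loc N) (Loc N) :=
  Derivation.mk'
    { toFun := fun f => ⟨Dtot i f.1, IsLocal.Dtot f.2 i⟩
      map_add' := fun f g => by
        obtain ⟨S, hf, hg⟩ := exists_finset₂ f g
        refine Subtype.ext ?_
        change Dtot i (f + g : Loc N).1 = Dtot i f.1 + Dtot i g.1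
        rw [Dtot_apply i _ S hf, Dtot_apply i _ S hg, Dtot_apply i (f + g) S, ← Subalgebra.coe_add]
        · congr 1
          simp only [map_add, mul_add, Finset.sum_add_distrib]
          abel
        · intro J hJ
          rw [map_add, hf J hJ, hg J hJ, add_zero]
      map_smul' := fun r f => by
        obtain ⟨S, hf⟩ := exists_finset f
        refine Subtype.ext ?_
        change Dtot i (r • f : Loc N).1 = r • Dtot i f.1
        rw [Dtot_apply i _ S hf, Dtot_apply i (r • f) S, ← Subalgebra.coe_smul]
        · congr 1
          simp only [Derivation.map_smul, smul_add, Finset.smul_sum, mul_smul_comm]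
        · intro J hJ
          rw [Derivation.map_smul, hf J hJ, smul_zero] }
    (fun f g => by
      obtain ⟨S, hf, hg⟩ := exists_finset₂ f g
      refine Subtype.ext ?_
      change Dtot i (f * g : Loc N).1 = f.1 * Dtot i g.1 + g.1 * Dtot i f.1
      rw [Dtot_apply i _ S hf, Dtot_apply i _ S hg, Dtot_apply i (f * g) S, ← Subalgebra.coe_mul,
        ← Subalgebra.coe_mul, ← Subalgebra.coe_add]
      · congr 1
        simp only [Derivation.leibniz, mul_add, Finset.sum_add_distrib, smul_eq_mul,
          Finset.mul_sum, mul_left_comm]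
        abel
      · intro J hJ
        rw [Derivation.leibniz, hf J hJ, hg J hJ, smul_zero, smul_zero, add_zero])

theorem DL_coe (i : Fin N) (f : Loc N) : (DL i f : Fn N) = Dtot i f := rfl

theorem DL_apply (i : Fin N) (f : Loc N) (S : Finset (MI N))
    (hS : ∀ J ∉ S, pdL (Sum.inr J) f = 0) :
    DL i f = pdL (Sum.inl i) f + ∑ J ∈ S, U (inc i J) * pdL (Sum.inr J) f :=
  Subtype.ext (Dtot_apply i f S hS)

theorem DL_U (i : Fin N) (J : MI N) : DL i (U J) = U (inc i J) := by
  classical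
  rw [DL_apply i (U J) {J}]
  · simp [pdL_U]
  · intro K hK
    have : K ≠ J := by simpa using hK
    simp [pdL_U, this]

theorem inc_comm (i j : Fin N) (J : MI N) : inc i (inc j J) = inc j (inc i J) := by
  by_cases h : i = j
  · rw [h]
  · simp only [inc, Function.update_of_ne h, Function.update_of_ne (Ne.symm h)]
    exact Function.update_comm (Ne.symm h) _ _ J

theorem DL_comm (i j : Fin N) (f : Loc N) : DL i (DL j f) = DL j (DL i f) := by
  obtain ⟨S, hS⟩ := exists_finset f
  have hS' : ∀ c, ∀ J ∉ S, pdL (Sum.inr J) (pdL c f) = 0 := fun c J hJ => by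
    rw [pdL_comm, hS J hJ, map_zero]
  have key : ∀ i j : Fin N, DL i (DL j f) =
      pdL (Sum.inl i) (pdL (Sum.inl j) f)
        + ∑ K ∈ S, U (inc i K) * pdL (Sum.inr K) (pdL (Sum.inl j) f)
        + ∑ K ∈ S, U (inc i (inc j K)) * pdL (Sum.inr K) f
        + ∑ K ∈ S, U (inc j K) * pdL (Sum.inr K) (pdL (Sum.inl i) f)
        + ∑ K ∈ S, ∑ M ∈ S, U (inc j K) * U (inc i M) * pdL (Sum.inr M) (pdL (Sum.inr K) f) := by
    intro i j
    rw [DL_apply j f S hS, map_add, map_sum, DL_apply i _ S (hS' _)]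
    have : ∀ K ∈ S, DL i (U (inc j K) * pdL (Sum.inr K) f)
        = U (inc i (inc j K)) * pdL (Sum.inr K) f
          + U (inc j K) * pdL (Sum.inr K) (pdL (Sum.inl i) f)
          + ∑ M ∈ S, U (inc j K) * U (inc i M) * pdL (Sum.inr M) (pdL (Sum.inr K) f) := by
      intro K _
      rw [Derivation.leibniz, DL_U, DL_apply i _ S (hS' _), pdL_comm (Sum.inl i)]
      simp only [smul_eq_mul, mul_add, Finset.mul_sum, mul_assoc]
      rw [mul_comm (pdL (Sum.inr K) f)]
      abel
    rw [Finset.sum_congr rfl this, Finset.sum_add_distrib, Finset.sum_add_distrib]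
    abel
  rw [key i j, key j i, pdL_comm (Sum.inl j),
    Finset.sum_comm (s := S) (t := S) (f := fun K M => U (inc j K) * U (inc i M) * _)]
  simp only [inc_comm i j]
  have : ∀ K M, U (inc j M) * U (inc i K) * pdL (Sum.inr K) (pdL (Sum.inr M) f)
      = U (inc i K) * U (inc j M) * pdL (Sum.inr M) (pdL (Sum.inr K) f) := fun K M => by
    rw [pdL_comm, mul_comm (U (inc j M))]
  simp only [this]
  abel

theorem inc_injective (i : Fin N) : Function.Injective (inc (N := N) i) := by
  intro J K h
  funext k
  have := congrFun h k
  simp only [inc, Function.update_apply] at this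
  split_ifs at this with hk
  · subst hk; omega
  · exact this

theorem inc_ne (i : Fin N) (J : MI N) : inc i J ≠ J := fun h => by
  have := congrFun h i
  simp [inc] at this

/-- The commutator `[∂/∂u_J, d/dx^i]`, evaluated on a function with vertical derivatives in `S`. -/
theorem pdL_DL (i : Fin N) (J : MI N) (f : Loc N) (S : Finset (MI N))
    (hS : ∀ J ∉ S, pdL (Sum.inr J) f = 0) :
    pdL (Sum.inr J) (DL i f) = DL i (pdL (Sum.inr J) f)
      + ∑ K ∈ S, if inc i K = J then pdL (Sum.inr K) f else 0 := by
  have hS' : ∀ K ∉ S, pdL (Sum.inr K) (pdL (Sum.inr J) f) = 0 := fun K hK => by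
    rw [pdL_comm, hS K hK, map_zero]
  rw [DL_apply i f S hS, map_add, map_sum, DL_apply i _ S hS', pdL_comm (Sum.inl i), add_assoc,
    ← Finset.sum_add_distrib]
  congr 1
  refine Finset.sum_congr rfl fun K _ => ?_
  rw [Derivation.leibniz, pdL_U, pdL_comm (Sum.inr K)]
  by_cases h : inc i K = J
  · simp [h]
  · simp [h, Ne.symm h]

/-- `[∂/∂u_{iK}, d/dx^i] = ∂/∂u_K`. -/
theorem pdL_DL_inc (i : Fin N) (K : MI N) (f : Loc N) :
    pdL (Sum.inr (inc i K)) (DL i f) = DL i (pdL (Sum.inr (inc i K)) f) + pdL (Sum.inr K) f := by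
  classical
  obtain ⟨S, hS⟩ := exists_finset f
  rw [pdL_DL i _ f S hS]
  simp only [(inc_injective i).eq_iff, Finset.sum_ite_eq']
  split_ifs with h
  · rfl
  · rw [hS K h]

theorem pdL_DL_of_notMem (i : Fin N) (J : MI N) (hJ : ∀ K, inc i K ≠ J) (f : Loc N) :
    pdL (Sum.inr J) (DL i f) = DL i (pdL (Sum.inr J) f) := by
  obtain ⟨S, hS⟩ := exists_finset f
  rw [pdL_DL i _ f S hS]
  simp [hJ]

end LocalFunctions

/-! ### Iterated derivatives -/

section Products

open scoped ContDiff

universe v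

variable {ι : Type*} {M : Type v} [Monoid M]

/-- The product `Π_i (a i)^(α i)` of a family of commuting elements. The factors are listed in the
arbitrary order of `Finset.toList`, as in `UPow`. -/
noncomputable def cprod (a : ι → M) (α : ι →₀ ℕ) : M :=
  (α.support.toList.map fun i => a i ^ α i).prod

/-- A family of commuting elements is the image of a family in a commutative monoid. -/
theorem exists_comm_lift (a : ι → M) (ha : ∀ i j, a i * a j = a j * a i) :
    ∃ (C : Type v) (_ : CommMonoid C) (b : ι → C) (φ : C →* M), ∀ i, φ (b i) = a i := by
  have : IsMulCommutative (Submonoid.closure (Set.range a)) :=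
    Submonoid.isMulCommutative_closure M
      (by rintro _ ⟨i, rfl⟩ _ ⟨j, rfl⟩; exact ha i j)
  exact ⟨Submonoid.closure (Set.range a), { mul_comm := fun x y => mul_comm' x y },
    fun i => ⟨a i, Submonoid.subset_closure ⟨i, rfl⟩⟩,
    (Submonoid.closure (Set.range a)).subtype, fun _ => rfl⟩

theorem cprod_add (a : ι → M) (ha : ∀ i j, a i * a j = a j * a i) (α β : ι →₀ ℕ) :
    cprod a (α + β) = cprod a α * cprod a β := by
  obtain ⟨C, _, b, φ, hφ⟩ := exists_comm_lift a ha
  have key : ∀ α : ι →₀ ℕ, cprod a α = φ (α.prod fun i n => b i ^ n) := by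
    intro α
    rw [Finsupp.prod, ← Finset.prod_map_toList, map_list_prod, List.map_map]
    simp only [cprod, Function.comp_def, map_pow, hφ]
  rw [key, key, key, Finsupp.prod_add_index' (by simp) (by simp [pow_add]), map_mul]

theorem cprod_single (a : ι → M) (i : ι) (n : ℕ) : cprod a (Finsupp.single i n) = a i ^ n := by
  by_cases h : n = 0
  · simp [cprod, h]
  · simp [cprod, Finsupp.support_single, h]

theorem finRange_prod_inc {N : ℕ} (a : Fin N → M) (ha : ∀ i j, a i * a j = a j * a i) (i : Fin N)
    (I : MI N) : ((List.finRange N).map fun k => a k ^ inc i I k).prod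
      = a i * ((List.finRange N).map fun k => a k ^ I k).prod := by
  obtain ⟨C, _, b, φ, hφ⟩ := exists_comm_lift a ha
  have key : ∀ I : MI N, ((List.finRange N).map fun k => a k ^ I k).prod
      = φ (∏ k, b k ^ I k) := by
    intro I
    rw [← List.prod_ofFn, List.ofFn_eq_map, map_list_prod, List.map_map]
    simp only [Function.comp_def, map_pow, hφ]
  have h : inc i I = fun k => (if k = i then 1 else 0) + I k := by
    funext k
    simp only [inc, Function.update_apply]
    split_ifs with h
    · rw [h, add_comm]
    · rw [zero_add]
  rw [key, key, h, ← hφ, ← map_mul]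
  simp only [pow_add, Finset.prod_mul_distrib]
  simp

end Products

section Iterated

open scoped ContDiff

variable {N : ℕ}

/-- `d/dx^i` as an element of the algebra of endomorphisms of `Loc(E)`. -/
noncomputable def DE (i : Fin N) : Module.End ℝ (Loc N) := (DL i).toLinearMap

/-- `∂/∂u_J` as an element of the algebra of endomorphisms of `Loc(E)`. -/
noncomputable def PE (J : MI N) : Module.End ℝ (Loc N) := (pdL (Sum.inr J)).toLinearMap

theorem DE_coe (i : Fin N) (f : Loc N) : (DE i f : Fn N) = Dtot i f := rfl

theorem DE_comm (i j : Fin N) : DE i * DE j = DE j * DE i := LinearMap.ext (DL_comm i j)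

theorem PE_comm (J K : MI N) : PE J * PE K = PE K * PE J := LinearMap.ext (pdL_comm _ _)

theorem DE_leibniz (i : Fin N) (f g : Loc N) : DE i (f * g) = DE i f * g + f * DE i g := by
  change DL i (f * g) = DL i f * g + f * DL i g
  rw [Derivation.leibniz, smul_eq_mul, smul_eq_mul]
  ring

theorem PE_leibniz (J : MI N) (f g : Loc N) : PE J (f * g) = PE J f * g + f * PE J g := by
  change pdL _ (f * g) = pdL _ f * g + f * pdL _ g
  rw [Derivation.leibniz, smul_eq_mul, smul_eq_mul]
  ring

theorem PE_mul_DE_inc (i : Fin N) (K : MI N) :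
    PE (inc i K) * DE i = DE i * PE (inc i K) + PE K :=
  LinearMap.ext (pdL_DL_inc i K)

theorem PE_mul_DE_of_notMem (i : Fin N) (J : MI N) (hJ : ∀ K, inc i K ≠ J) :
    PE J * DE i = DE i * PE J :=
  LinearMap.ext (pdL_DL_of_notMem i J hJ)

/-- `(d/dx)^I` on `Loc(E)`. -/
noncomputable def DP (I : MI N) : Module.End ℝ (Loc N) :=
  ((List.finRange N).map fun i => DE i ^ I i).prod

/-- `(∂/∂u)^α` on `Loc(E)`. -/
noncomputable def UP (α : MI N →₀ ℕ) : Module.End ℝ (Loc N) := cprod PE α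

theorem iterate_coe (D : Fn N → Fn N) (E : Module.End ℝ (Loc N))
    (h : ∀ f : Loc N, (E f : Fn N) = D f) (n : ℕ) (f : Loc N) : (((E ^ n) f : Loc N) : Fn N) = D^[n] f := by
  induction n with
  | zero => rfl
  | succ n ih => rw [pow_succ', Function.iterate_succ_apply', ← ih, Module.End.mul_apply, h]

theorem foldr_coe {ι : Type*} (l : List ι) (n : ι → ℕ) (D : ι → Fn N → Fn N)
    (E : ι → Module.End ℝ (Loc N)) (h : ∀ i, ∀ f : Loc N, (E i f : Fn N) = D i f) (f : Loc N) :
    ((((l.map fun i => E i ^ n i).prod) f : Loc N) : Fn N)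
      = l.foldr (fun i g => (D i)^[n i] ∘ g) id f := by
  induction l with
  | nil => rfl
  | cons i l ih =>
    rw [List.map_cons, List.prod_cons, List.foldr_cons, Module.End.mul_apply,
      iterate_coe (D i) (E i) (h i), ih]
    rfl

theorem DP_coe (I : MI N) (f : Loc N) : (DP I f : Fn N) = DPow I f :=
  foldr_coe _ I Dtot DE DE_coe f

theorem UP_coe (α : MI N →₀ ℕ) (f : Loc N) : (UP α f : Fn N) = UPow α f :=
  foldr_coe _ α pderivU PE (fun _ _ => rfl) f

theorem DP_zero : DP (0 : MI N) = 1 := by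
  simp only [DP, Pi.zero_apply, pow_zero]
  exact List.prod_eq_one (by simp)

theorem DP_inc (i : Fin N) (I : MI N) : DP (inc i I) = DE i * DP I :=
  finRange_prod_inc DE DE_comm i I

/-- Induction on multi-indices: every non-zero one is of the form `iI`. -/
theorem MI.induction {p : MI N → Prop} (zero : p 0) (step : ∀ i I, p I → p (inc i I)) (I : MI N) :
    p I := by
  induction h : ∑ k, I k generalizing I with
  | zero =>
    have : I = 0 := funext fun k => by simpa using (Finset.sum_eq_zero_iff.1 h) k
    exact this ▸ zero
  | succ n ih =>
    obtain ⟨i, hi⟩ : ∃ i, I i ≠ 0 := by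
      by_contra hc
      push Not at hc
      simp [hc] at h
    have hI : inc i (Function.update I i (I i - 1)) = I := by
      funext k
      by_cases hk : k = i
      · subst hk
        simp [inc]
        omega
      · simp [inc, hk]
    rw [← hI]
    refine step _ _ (ih _ ?_)
    have h1 := Finset.add_sum_erase Finset.univ I (Finset.mem_univ i)
    have h2 := Finset.add_sum_erase Finset.univ (Function.update I i (I i - 1)) (Finset.mem_univ i)
    have h3 : ∑ k ∈ Finset.univ.erase i, Function.update I i (I i - 1) k
        = ∑ k ∈ Finset.univ.erase i, I k :=
      Finset.sum_congr rfl fun k hk => by rw [Function.update_of_ne (Finset.ne_of_mem_erase hk)]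
    rw [Function.update_self] at h2
    omega

theorem sum_inc (i : Fin N) (I : MI N) : ∑ k, inc i I k = ∑ k, I k + 1 := by
  have h : inc i I = fun k => I k + if k = i then 1 else 0 := by
    funext k
    simp only [inc, Function.update_apply]
    split_ifs with h <;> simp_all
  rw [h, Finset.sum_add_distrib]
  simp

theorem DP_mul_DE (i : Fin N) (I : MI N) : DP I * DE i = DE i * DP I := by
  induction I using MI.induction with
  | zero => rw [DP_zero, one_mul, mul_one]
  | step j I ih => rw [DP_inc, mul_assoc, ih, ← mul_assoc, ← mul_assoc, DE_comm]

theorem UP_zero : UP (0 : MI N →₀ ℕ) = 1 := by simp [UP, cprod]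

theorem UP_add (α β : MI N →₀ ℕ) : UP (α + β) = UP α * UP β := cprod_add PE PE_comm α β

theorem UP_single (J : MI N) (n : ℕ) : UP (Finsupp.single J n) = PE J ^ n := cprod_single PE J n

theorem UP_add_single (α : MI N →₀ ℕ) (J : MI N) :
    UP (α + Finsupp.single J 1) = UP α * PE J := by
  rw [UP_add, UP_single, pow_one]

theorem UP_eq_mul {α : MI N →₀ ℕ} {J : MI N} (h : α J ≠ 0) :
    UP α = UP (α - Finsupp.single J 1) * PE J := by
  rw [← UP_add_single, tsub_add_cancel_of_le]
  simpa using Nat.one_le_iff_ne_zero.2 h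

theorem PE_mul_UP (α : MI N →₀ ℕ) (J : MI N) : PE J * UP α = UP α * PE J := by
  have h1 : PE J = UP (Finsupp.single J 1) := by rw [UP_single, pow_one]
  rw [h1, ← UP_add, add_comm, UP_add]

theorem UP_eq_zero {α : MI N →₀ ℕ} {J : MI N} (h : α J ≠ 0) {f : Loc N} (hf : PE J f = 0) :
    UP α f = 0 := by
  rw [UP_eq_mul h, Module.End.mul_apply, hf, map_zero]

theorem degf_le_iff (α : MI N →₀ ℕ) (m : ℕ) : degf α ≤ m ↔ ∀ J, α J ≠ 0 → ∑ i, J i ≤ m := by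
  simp [degf, Finset.sup_le_iff]

/-- The iterated vertical derivatives of a local function vanish in high differential degree. -/
theorem exists_deg (f : Loc N) : ∃ m, ∀ α, UP α f ≠ 0 → degf α ≤ m := by
  obtain ⟨S, hS⟩ := exists_finset f
  refine ⟨S.sup fun J => ∑ i, J i, fun α hα => (degf_le_iff _ _).2 fun J hJ => ?_⟩
  have : J ∈ S := by
    by_contra hJS
    exact hα (UP_eq_zero hJ (hS J hJS))
  exact Finset.le_sup (f := fun J : MI N => ∑ i, J i) this

end Iterated

/-! ### The algebra of coefficient data -/

section Finsum

open Function

/-- Reindexing a finitely supported double sum along the shifts `γ ↦ γ + e_{s K}`. -/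
theorem finsum_shift {ι M : Type*} [AddCommMonoid M] (g : (ι →₀ ℕ) × ι → M)
    (hg : (support g).Finite) (s : ι → ι) :
    ∑ᶠ β : ι →₀ ℕ, ∑ᶠ K, (if β (s K) = 0 then 0 else g (β - Finsupp.single (s K) 1, K))
      = ∑ᶠ x, g x := by
  set h : (ι →₀ ℕ) × ι → M :=
    fun x => if x.1 (s x.2) = 0 then 0 else g (x.1 - Finsupp.single (s x.2) 1, x.2) with hh
  set φ : (ι →₀ ℕ) × ι → (ι →₀ ℕ) × ι := fun x => (x.1 + Finsupp.single (s x.2) 1, x.2) with hφ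
  have hinj : Injective φ := by
    rintro ⟨a, K⟩ ⟨b, L⟩ hab
    simp only [hφ, Prod.mk.injEq] at hab
    obtain ⟨hab, rfl⟩ := hab
    rw [add_right_cancel hab]
  have hcomp : ∀ x, h (φ x) = g x := by
    intro x
    simp [hh, hφ]
  have hrange : support h ⊆ Set.range φ := by
    rintro ⟨a, K⟩ hx
    have ha : a (s K) ≠ 0 := fun h0 => hx (by simp [hh, h0])
    refine ⟨(a - Finsupp.single (s K) 1, K), ?_⟩
    simp only [hφ, Prod.mk.injEq, and_true]
    exact tsub_add_cancel_of_le (by simpa using Nat.one_le_iff_ne_zero.2 ha)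
  have hfin : (support h).Finite := by
    refine (hg.image φ).subset fun x hx => ?_
    obtain ⟨y, rfl⟩ := hrange hx
    exact ⟨y, by rwa [mem_support, ← hcomp], rfl⟩
  calc _ = ∑ᶠ x, h x := (finsum_curry h hfin).symm
    _ = ∑ᶠ x ∈ Set.range φ, h x := by
        rw [← finsum_mem_univ]
        refine finsum_mem_inter_support_eq' h _ _ fun x hx => ?_
        simp [hrange hx]
    _ = ∑ᶠ x, g x := by
        rw [finsum_mem_range hinj]
        exact finsum_congr hcomp

theorem finite_support_shift {ι M : Type*} [AddCommMonoid M] (g : (ι →₀ ℕ) × ι → M)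
    (hg : (support g).Finite) (s : ι → ι) :
    (support fun β : ι →₀ ℕ =>
      ∑ᶠ K, (if β (s K) = 0 then 0 else g (β - Finsupp.single (s K) 1, K))).Finite := by
  refine (hg.image fun x => x.1 + Finsupp.single (s x.2) 1).subset fun β hβ => ?_
  obtain ⟨K, hK⟩ : ∃ K, (if β (s K) = 0 then 0 else g (β - Finsupp.single (s K) 1, K)) ≠ 0 := by
    by_contra h
    push Not at h
    exact hβ (by simp only [h, finsum_zero])
  have h0 : β (s K) ≠ 0 := fun h => hK (if_pos h)
  rw [if_neg h0] at hK
  exact ⟨_, hK, tsub_add_cancel_of_le (by simpa using Nat.one_le_iff_ne_zero.2 h0)⟩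

theorem finsupp_induction {ι : Type*} {p : (ι →₀ ℕ) → Prop} (zero : p 0)
    (step : ∀ α J, p α → p (α + Finsupp.single J 1)) (α : ι →₀ ℕ) : p α := by
  classical
  obtain ⟨m, rfl⟩ := Multiset.toFinsupp.surjective α
  induction m using Multiset.induction with
  | empty => simpa using zero
  | cons J m ih =>
    rw [← Multiset.singleton_add, map_add, Multiset.toFinsupp_singleton, add_comm]
    exact step _ _ ih

end Finsum

section Data

open Function

variable {N : ℕ}

/-- The commutator `[(∂/∂u)^α, d/dx^i] = Σ_K α(iK) (∂/∂u)^{α - e_{iK} + e_K}`. -/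
theorem UP_DE (i : Fin N) (α : MI N →₀ ℕ) (f : Loc N) :
    UP α (DE i f) = DE i (UP α f)
      + ∑ᶠ K, α (inc i K) • UP (α - Finsupp.single (inc i K) 1) (PE K f) := by
  classical
  have hfin : ∀ (α : MI N →₀ ℕ) (g : MI N → Loc N),
      (support fun K => α (inc i K) • g K).Finite := by
    intro α g
    refine (α.support.finite_toSet.preimage (inc_injective i).injOn).subset fun K hK => ?_
    simp only [Set.mem_preimage, Finset.mem_coe, Finsupp.mem_support_iff]
    intro h0
    exact hK (by simp [h0])
  induction α using finsupp_induction generalizing f with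
  | zero => simp [UP_zero]
  | step α J ih =>
    have hterm : ∀ K, (α + Finsupp.single J 1 : MI N →₀ ℕ) (inc i K) •
          UP (α + Finsupp.single J 1 - Finsupp.single (inc i K) 1) (PE K f)
        = α (inc i K) • UP (α - Finsupp.single (inc i K) 1) (PE K (PE J f))
          + if inc i K = J then UP α (PE K f) else 0 := by
      intro K
      have hcomm : PE K (PE J f) = PE J (PE K f) := LinearMap.congr_fun (PE_comm K J) f
      rw [hcomm]
      by_cases h : inc i K = J
      · rw [if_pos h, h, add_tsub_cancel_right, Finsupp.add_apply, Finsupp.single_eq_same, add_smul,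
          one_smul]
        congr 1
        by_cases h0 : α J = 0
        · rw [h0, zero_smul, zero_smul]
        · rw [UP_eq_mul h0, Module.End.mul_apply]
      · rw [if_neg h, add_zero, Finsupp.add_apply, Finsupp.single_eq_of_ne h, add_zero]
        by_cases h0 : α (inc i K) = 0
        · rw [h0, zero_smul, zero_smul]
        · rw [← tsub_add_eq_add_tsub, UP_add_single, Module.End.mul_apply]
          simpa using Nat.one_le_iff_ne_zero.2 h0
    have hfin2 : (support fun K => if inc i K = J then UP α (PE K f) else 0).Finite := by
      refine ((Set.finite_singleton J).preimage (inc_injective i).injOn).subset fun K hK => ?_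
      by_contra h
      exact hK (if_neg h)
    rw [finsum_congr hterm, finsum_add_distrib (hfin α _) hfin2, UP_add_single,
      Module.End.mul_apply, Module.End.mul_apply, ← add_assoc, ← ih (PE J f)]
    by_cases hJ : ∃ K, inc i K = J
    · obtain ⟨K, rfl⟩ := hJ
      rw [finsum_eq_single _ K fun L hL => if_neg fun h => hL (inc_injective i h), if_pos rfl,
        ← Module.End.mul_apply (PE (inc i K)), PE_mul_DE_inc, LinearMap.add_apply, map_add]
      rfl
    · push Not at hJ
      rw [← Module.End.mul_apply (PE J), PE_mul_DE_of_notMem i J hJ]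
      simp [hJ]

variable (N) in
/-- The finitely many coefficients `(p_I)_I` of an operator `Σ_I p_I (d/dx)^I`. -/
abbrev Col := MI N →₀ Loc N

/-- The operator `Σ_I p_I (d/dx)^I`. -/
noncomputable def Op₁ : Col N →ₗ[ℝ] Module.End ℝ (Loc N) :=
  Finsupp.lsum ℝ fun I => (LinearMap.mulRight ℝ (DP I)).comp (LinearMap.mul ℝ (Loc N))

theorem Op₁_single (I : MI N) (p f : Loc N) : Op₁ (Finsupp.single I p) f = p * DP I f := by
  simp [Op₁]

theorem Op₁_apply (c : Col N) (f : Loc N) : Op₁ c f = c.sum fun I p => p * DP I f := by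
  simp [Op₁, Finsupp.sum, LinearMap.sum_apply]

/-- The characteristic `Σ_I (-1)^{|I|} (d/dx)^I p_I` of `Σ_I p_I (d/dx)^I`. -/
noncomputable def chi₁ : Col N →ₗ[ℝ] Loc N :=
  Finsupp.lsum ℝ fun I => (-1 : ℝ) ^ (∑ k, I k) • DP I

theorem chi₁_single (I : MI N) (p : Loc N) :
    chi₁ (Finsupp.single I p) = (-1 : ℝ) ^ (∑ k, I k) • DP I p := by
  simp [chi₁]

/-- Coefficients of `d/dx^i ∘ Σ_I p_I (d/dx)^I`. -/
noncomputable def lcol (i : Fin N) : Col N →ₗ[ℝ] Col N :=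
  Finsupp.lsum ℝ fun I => (Finsupp.lsingle I).comp (DE i) + Finsupp.lsingle (inc i I)

theorem lcol_single (i : Fin N) (I : MI N) (p : Loc N) :
    lcol i (Finsupp.single I p) = Finsupp.single I (DE i p) + Finsupp.single (inc i I) p := by
  simp [lcol]

/-- Coefficients of `(Σ_I p_I (d/dx)^I) ∘ d/dx^i`. -/
noncomputable def rcol (i : Fin N) : Col N →ₗ[ℝ] Col N := Finsupp.lmapDomain (Loc N) ℝ (inc i)

theorem rcol_single (i : Fin N) (I : MI N) (p : Loc N) :
    rcol i (Finsupp.single I p) = Finsupp.single (inc i I) p := by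
  simp [rcol]

theorem Op₁_lcol (i : Fin N) (c : Col N) : Op₁ (lcol i c) = DE i * Op₁ c := by
  induction c using Finsupp.induction_linear with
  | zero => simp
  | add c d hc hd => rw [map_add, map_add, map_add, mul_add, hc, hd]
  | single I p =>
    refine LinearMap.ext fun f => ?_
    rw [lcol_single, map_add, LinearMap.add_apply, Module.End.mul_apply, Op₁_single, Op₁_single,
      Op₁_single, DE_leibniz, DP_inc, Module.End.mul_apply]

theorem Op₁_rcol (i : Fin N) (c : Col N) : Op₁ (rcol i c) = Op₁ c * DE i := by
  induction c using Finsupp.induction_linear with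
  | zero => simp
  | add c d hc hd => rw [map_add, map_add, map_add, add_mul, hc, hd]
  | single I p =>
    refine LinearMap.ext fun f => ?_
    rw [rcol_single, Module.End.mul_apply, Op₁_single, Op₁_single, DP_inc, ← DP_mul_DE,
      Module.End.mul_apply]

theorem chi₁_lcol (i : Fin N) (c : Col N) : chi₁ (lcol i c) = 0 := by
  induction c using Finsupp.induction_linear with
  | zero => simp
  | add c d hc hd => rw [map_add, map_add, hc, hd, add_zero]
  | single I p =>
    rw [lcol_single, map_add, chi₁_single, chi₁_single, sum_inc, pow_succ, DP_inc, ← DP_mul_DE,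
      Module.End.mul_apply]
    simp

/-- With `chi₁_lcol`: left composition with `d/dx^i` kills the characteristic, right composition
turns it into `-d/dx^i` of it. -/
theorem chi₁_rcol (i : Fin N) (c : Col N) : chi₁ (rcol i c) = - DE i (chi₁ c) := by
  induction c using Finsupp.induction_linear with
  | zero => simp
  | add c d hc hd => rw [map_add, map_add, map_add, map_add, hc, hd, neg_add]
  | single I p =>
    rw [rcol_single, chi₁_single, chi₁_single, sum_inc, pow_succ, DP_inc, map_smul,
      Module.End.mul_apply]
    simp

/-- Integration by parts for operators in total derivatives. -/
theorem exists_parts₁ (c : Col N) :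
    ∃ b : Fin N → Col N, c = Finsupp.single 0 (chi₁ c) + ∑ j, lcol j (b j) := by
  -- it suffices to find some constant term: applying `chi₁` then identifies it
  suffices h : ∃ (a : Loc N) (b : Fin N → Col N), c = Finsupp.single 0 a + ∑ j, lcol j (b j) by
    obtain ⟨a, b, h⟩ := h
    have ha : chi₁ c = a := by
      rw [h, map_add, map_sum, chi₁_single]
      simp [chi₁_lcol, DP_zero]
    exact ⟨b, ha.symm ▸ h⟩
  induction c using Finsupp.induction_linear with
  | zero => exact ⟨0, 0, by simp⟩
  | add c d hc hd =>
    obtain ⟨a, b, h⟩ := hc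
    obtain ⟨a', b', h'⟩ := hd
    refine ⟨a + a', b + b', ?_⟩
    simp only [Pi.add_apply, map_add, Finset.sum_add_distrib, Finsupp.single_add]
    nth_rewrite 1 [h, h']
    abel
  | single I p =>
    -- `p (d/dx)^{iI} = d/dx^i ∘ p (d/dx)^I - (dp/dx^i) (d/dx)^I`
    induction I using MI.induction generalizing p with
    | zero => exact ⟨p, 0, by simp⟩
    | step i I ih =>
      obtain ⟨a, b, h⟩ := ih (DE i p)
      refine ⟨-a, fun j => (if j = i then Finsupp.single I p else 0) - b j, ?_⟩
      have h1 : ∑ j, lcol j ((if j = i then Finsupp.single I p else 0) - b j)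
          = lcol i (Finsupp.single I p) - ∑ j, lcol j (b j) := by
        have h2 : ∀ j, lcol j ((if j = i then Finsupp.single I p else 0) - b j)
            = lcol j (if j = i then Finsupp.single I p else 0) - lcol j (b j) :=
          fun j => map_sub (lcol j) _ _
        rw [Finset.sum_congr rfl fun j _ => h2 j]
        refine (Finset.sum_sub_distrib
          (fun j => lcol j (if j = i then Finsupp.single I p else 0)) fun j => lcol j (b j)).trans ?_
        congr 1
        rw [Finset.sum_eq_single i (fun j _ hj => by rw [if_neg hj, map_zero]) (by simp),
          if_pos rfl]
      rw [h1, lcol_single, h, Finsupp.single_neg]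
      abel

variable (N) in
/-- Coefficient data of a local differential operator `Σ_α (Σ_I p_{I,α} (d/dx)^I) (∂/∂u)^α`: a
column of coefficients for each `α`, finitely many of them non-zero in each differential degree. -/
def Dat : Submodule ℝ ((MI N →₀ ℕ) → Col N) where
  carrier := {c | ∀ m, {α | c α ≠ 0 ∧ degf α ≤ m}.Finite}
  zero_mem' m := by simp
  add_mem' {c d} hc hd m := by
    refine ((hc m).union (hd m)).subset fun α hα => ?_
    by_cases h : c α = 0
    · exact Or.inr ⟨fun h' => hα.1 (by simp [h, h']), hα.2⟩
    · exact Or.inl ⟨h, hα.2⟩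
  smul_mem' r c hc m :=
    (hc m).subset fun _ hα => ⟨fun h => hα.1 (by simp [h]), hα.2⟩

theorem Dat_finite (c : Dat N) (f : Loc N) : {α | c.1 α ≠ 0 ∧ UP α f ≠ 0}.Finite := by
  obtain ⟨m, hm⟩ := exists_deg f
  exact (c.2 m).subset fun α hα => ⟨hα.1, hm α hα.2⟩

theorem Dat_finite_support (c : Dat N) (f : Loc N) :
    (support fun α => Op₁ (c.1 α) (UP α f)).Finite :=
  (Dat_finite c f).subset fun α hα => ⟨fun h => hα (by simp [h]), fun h => hα (by simp [h])⟩

/-- The operator `Σ_α (Σ_I p_{I,α} (d/dx)^I) (∂/∂u)^α` with given coefficient data. On each local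
function only finitely many `α` contribute. -/
noncomputable def Real' : Dat N →ₗ[ℝ] Module.End ℝ (Loc N) :=
  LinearMap.mk₂ ℝ (fun c f => ∑ᶠ α, Op₁ (c.1 α) (UP α f))
    (fun c d f => by
      rw [← finsum_add_distrib (Dat_finite_support c f) (Dat_finite_support d f)]
      simp)
    (fun r c f => by
      rw [smul_finsum' r (Dat_finite_support c f)]
      simp)
    (fun c f g => by
      rw [← finsum_add_distrib (Dat_finite_support c f) (Dat_finite_support c g)]
      simp)
    (fun r c f => by
      rw [smul_finsum' r (Dat_finite_support c f)]
      simp)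

theorem Real'_apply (c : Dat N) (f : Loc N) : Real' c f = ∑ᶠ α, Op₁ (c.1 α) (UP α f) := rfl

/-- Data of the characteristic: each column `(p_{I,α})_I` is replaced by the single coefficient
`Σ_I (-1)^{|I|} (d/dx)^I p_{I,α}` at `I = 0`. -/
noncomputable def chiDat : Dat N →ₗ[ℝ] Dat N where
  toFun c := ⟨fun α => Finsupp.single 0 (chi₁ (c.1 α)), fun m =>
    (c.2 m).subset fun _ hα => ⟨fun h => hα.1 (by simp [h]), hα.2⟩⟩
  map_add' c d := Subtype.ext <| funext fun α => by
    change Finsupp.single 0 (chi₁ (c.1 α + d.1 α)) = _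
    rw [map_add, Finsupp.single_add]
    rfl
  map_smul' r c := Subtype.ext <| funext fun α => by
    change Finsupp.single 0 (chi₁ (r • c.1 α)) = _
    rw [map_smul, ← Finsupp.smul_single]
    rfl

/-- Data of `d/dx^i ∘ A`. -/
noncomputable def lDat (i : Fin N) (c : Dat N) : Dat N :=
  ⟨fun α => lcol i (c.1 α), fun m =>
    (c.2 m).subset fun _ hα => ⟨fun h => hα.1 (by simp [h]), hα.2⟩⟩

theorem chiDat_lDat (i : Fin N) (c : Dat N) : chiDat (lDat i c) = 0 := by
  refine Subtype.ext (funext fun α => ?_)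
  change Finsupp.single 0 (chi₁ (lcol i (c.1 α))) = 0
  rw [chi₁_lcol, Finsupp.single_zero]

theorem Real'_lDat (i : Fin N) (c : Dat N) : Real' (lDat i c) = DE i * Real' c := by
  refine LinearMap.ext fun f => ?_
  rw [Module.End.mul_apply, Real'_apply, Real'_apply, map_finsum (DE i) (Dat_finite_support c f)]
  exact finsum_congr fun α => LinearMap.congr_fun (Op₁_lcol i _) _

/-- Integration by parts: `A = χ(A) + Σ_j d/dx^j ∘ B_j`. -/
theorem exists_parts (c : Dat N) : ∃ b : Fin N → Dat N, c = chiDat c + ∑ j, lDat j (b j) := by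
  classical
  choose b hb using exists_parts₁ (N := N)
  refine ⟨fun j => ⟨fun α => if c.1 α = 0 then 0 else b (c.1 α) j, fun m =>
    (c.2 m).subset fun _ hα => ⟨fun h => hα.1 (by simp [h]), hα.2⟩⟩, ?_⟩
  refine Subtype.ext (funext fun α => ?_)
  rw [Submodule.coe_add, Submodule.coe_sum, Pi.add_apply, Finset.sum_apply]
  change c.1 α = Finsupp.single 0 (chi₁ (c.1 α))
    + ∑ j, lcol j (if c.1 α = 0 then 0 else b (c.1 α) j)
  by_cases h : c.1 α = 0
  · simp [h]
  · simp only [if_neg h]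
    exact hb (c.1 α)

theorem degf_shift_le {β : MI N →₀ ℕ} {m : ℕ} (hβ : degf β ≤ m) (i : Fin N) {K : MI N}
    (hK : β K ≠ 0) :
    degf (β - Finsupp.single K 1 + Finsupp.single (inc i K) 1) ≤ m + 1 := by
  rw [degf_le_iff] at hβ ⊢
  intro J hJ
  by_cases h : J = inc i K
  · rw [h, sum_inc]
    exact Nat.succ_le_succ (hβ K hK)
  · refine (hβ J fun h0 => hJ ?_).trans (Nat.le_succ m)
    simp [h0, Finsupp.single_eq_of_ne h]

/-- Data of `A ∘ d/dx^i`: moving `d/dx^i` past `(∂/∂u)^α` produces, by `UP_DE`, the extra terms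
`α(iK) (∂/∂u)^β` with `β = α - e_{iK} + e_K`; they are collected here by their exponent `β`. -/
noncomputable def rDat (i : Fin N) (c : Dat N) : Dat N :=
  ⟨fun β => rcol i (c.1 β) + ∑ K ∈ β.support, (β (inc i K) + 1) •
      c.1 (β - Finsupp.single K 1 + Finsupp.single (inc i K) 1), fun m => by
    classical
    -- the finitely many `β` obtained from the relevant `α` by replacing some `iK` by `K`
    refine ((c.2 m).union ((c.2 (m + 1)).biUnion fun α _ =>
      ((α.support.finite_toSet.preimage (inc_injective i).injOn).image fun K =>
        α - Finsupp.single (inc i K) 1 + Finsupp.single K 1))).subset ?_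
    rintro β ⟨hβ, hdeg⟩
    by_cases h0 : c.1 β = 0
    · right
      replace hβ : rcol i (c.1 β) + ∑ K ∈ β.support, (β (inc i K) + 1) •
        c.1 (β - Finsupp.single K 1 + Finsupp.single (inc i K) 1) ≠ 0 := hβ
      rw [h0, map_zero, zero_add] at hβ
      obtain ⟨K, hK, hne⟩ := Finset.exists_ne_zero_of_sum_ne_zero hβ
      have hK' : β K ≠ 0 := Finsupp.mem_support_iff.1 hK
      refine Set.mem_biUnion (x := β - Finsupp.single K 1 + Finsupp.single (inc i K) 1)
        ⟨fun h => hne (by simp [h]), degf_shift_le hdeg i hK'⟩ ⟨K, ?_, ?_⟩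
      · simp
      · simp only [add_tsub_cancel_right]
        exact tsub_add_cancel_of_le (by simpa using Nat.one_le_iff_ne_zero.2 hK')
    · exact Or.inl ⟨h0, hdeg⟩⟩

theorem Real'_rDat (i : Fin N) (c : Dat N) : Real' (rDat i c) = Real' c * DE i := by
  classical
  refine LinearMap.ext fun f => ?_
  rw [Module.End.mul_apply, Real'_apply, Real'_apply]
  -- the common term of both commutator sums, indexed by `γ = α - e_{iK} = β - e_K` and `K`
  set g : (MI N →₀ ℕ) × MI N → Loc N := fun x => (x.1 (inc i x.2) + 1) •
    Op₁ (c.1 (x.1 + Finsupp.single (inc i x.2) 1)) (UP (x.1 + Finsupp.single x.2 1) f) with hg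
  have hgfin : (support g).Finite := by
    obtain ⟨m, hm⟩ := exists_deg f
    refine ((c.2 (m + 1)).biUnion fun α _ =>
      ((α.support.finite_toSet.preimage (inc_injective i).injOn).image fun K =>
        (α - Finsupp.single (inc i K) 1, K))).subset ?_
    rintro ⟨γ, K⟩ hx
    have h1 : c.1 (γ + Finsupp.single (inc i K) 1) ≠ 0 := fun h => hx (by simp [hg, h])
    have h2 : degf (γ + Finsupp.single K 1) ≤ m := hm _ fun h => hx (by simp [hg, h])
    have h3 := degf_shift_le h2 i (K := K) (by simp)
    rw [add_tsub_cancel_right] at h3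
    refine Set.mem_biUnion (x := γ + Finsupp.single (inc i K) 1) ⟨h1, h3⟩ ⟨K, ?_, ?_⟩
    · simp
    · simp
  have hL : ∀ β, Op₁ ((rDat i c).1 β) (UP β f) = Op₁ (c.1 β) (DE i (UP β f))
      + ∑ᶠ K, (if β K = 0 then 0 else g (β - Finsupp.single K 1, K)) := by
    intro β
    rw [finsum_eq_sum_of_support_subset (s := β.support)]
    · change Op₁ (rcol i (c.1 β) + ∑ K ∈ β.support, (β (inc i K) + 1) •
        c.1 (β - Finsupp.single K 1 + Finsupp.single (inc i K) 1)) (UP β f) = _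
      rw [map_add, map_sum, LinearMap.add_apply, Op₁_rcol, LinearMap.sum_apply]
      refine congrArg _ (Finset.sum_congr rfl fun K hK => ?_)
      have hK' : β K ≠ 0 := Finsupp.mem_support_iff.1 hK
      have h1 : β - Finsupp.single K 1 + Finsupp.single K 1 = β :=
        tsub_add_cancel_of_le (by simpa using Nat.one_le_iff_ne_zero.2 hK')
      have h2 : (β - Finsupp.single K 1 : MI N →₀ ℕ) (inc i K) = β (inc i K) := by
        simp [Finsupp.single_eq_of_ne (inc_ne i K)]
      simp only [if_neg hK', hg, h1, h2, map_nsmul, LinearMap.smul_apply]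
    · intro K hK
      rw [Finset.mem_coe, Finsupp.mem_support_iff]
      intro h
      exact hK (by simp [h])
  have hR : ∀ α, Op₁ (c.1 α) (UP α (DE i f)) = Op₁ (c.1 α) (DE i (UP α f))
      + ∑ᶠ K, (if α (inc i K) = 0 then 0 else g (α - Finsupp.single (inc i K) 1, K)) := by
    intro α
    rw [UP_DE, map_add, map_finsum]
    · refine congrArg _ (finsum_congr fun K => ?_)
      by_cases h : α (inc i K) = 0
      · simp [h]
      · have h1 : α - Finsupp.single (inc i K) 1 + Finsupp.single (inc i K) 1 = α :=
          tsub_add_cancel_of_le (by simpa using Nat.one_le_iff_ne_zero.2 h)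
        have h2 : (α - Finsupp.single (inc i K) 1 : MI N →₀ ℕ) (inc i K) + 1 = α (inc i K) := by
          simp only [Finsupp.tsub_apply, Finsupp.single_eq_same]
          omega
        simp only [if_neg h, hg, h1, h2, map_nsmul, UP_add_single, Module.End.mul_apply]
    · refine (α.support.finite_toSet.preimage (inc_injective i).injOn).subset fun K hK => ?_
      simp only [Set.mem_preimage, Finset.mem_coe, Finsupp.mem_support_iff]
      intro h0
      exact hK (by simp [h0])
  have hfin : (support fun α => Op₁ (c.1 α) (DE i (UP α f))).Finite := by
    refine (Dat_finite c f).subset fun α hα =>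
      ⟨fun h => hα (by simp [h]), fun h => hα (by simp [h])⟩
  have e1 := finsum_shift g hgfin id
  have e2 := finsum_shift g hgfin (inc i)
  have f1 := finite_support_shift g hgfin id
  simp only [id] at e1 f1
  rw [finsum_congr hL, finsum_congr hR, finsum_add_distrib hfin f1,
    finsum_add_distrib hfin (finite_support_shift g hgfin (inc i))]
  exact congrArg _ (e1.trans e2.symm)

/-- The commutator of `χ(A)` with `d/dx^i` is `χ(A ∘ d/dx^i)`: the commutator terms of `A ∘ d/dx^i`
are carried along by `χ`, and its main term contributes `-Σ_α (d/dx^i χ_α) (∂/∂u)^α`, where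
`χ_α` are the coefficients of `χ(A)`. -/
theorem rDat_chiDat (i : Fin N) (c : Dat N) :
    rDat i (chiDat c) = chiDat (rDat i c) + lDat i (chiDat c) := by
  refine Subtype.ext (funext fun β => ?_)
  rw [Submodule.coe_add, Pi.add_apply]
  change rcol i (Finsupp.single 0 (chi₁ (c.1 β))) + ∑ K ∈ β.support, (β (inc i K) + 1) •
      Finsupp.single 0 (chi₁ (c.1 (β - Finsupp.single K 1 + Finsupp.single (inc i K) 1)))
    = Finsupp.single 0 (chi₁ (rcol i (c.1 β) + ∑ K ∈ β.support, (β (inc i K) + 1) •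
        c.1 (β - Finsupp.single K 1 + Finsupp.single (inc i K) 1)))
      + lcol i (Finsupp.single 0 (chi₁ (c.1 β)))
  rw [map_add, map_sum, chi₁_rcol, rcol_single, lcol_single, Finsupp.single_add,
    Finsupp.single_neg, Finsupp.single_finsetSum]
  simp only [map_nsmul, Finsupp.smul_single]
  abel

/-- If `χ(A ∘ d/dx^i) = 0`, then `χ(A)` commutes with `d/dx^i`. -/
theorem chi_comm {i : Fin N} {c : Dat N} (h : Real' (chiDat (rDat i c)) = 0) :
    Real' (chiDat c) * DE i = DE i * Real' (chiDat c) := by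
  rw [← Real'_rDat, rDat_chiDat, map_add, h, zero_add, Real'_lDat]

end Data

/-! ### Uniqueness of coefficients -/

section Uniqueness

open scoped ContDiff
open Function

variable {N : ℕ}

/-- The local function `exp(Σ_i ξ_i x^i)`. -/
noncomputable def expL (ξ : Fin N → ℝ) : Loc N :=
  ⟨fun p => Real.exp (∑ i, ξ i * p.1 i), by
    refine ⟨∅, fun z => Real.exp (∑ i, ξ i * z.1 i), ?_, fun _ => rfl⟩
    fun_prop⟩

theorem PE_expL (J : MI N) (ξ : Fin N → ℝ) : PE J (expL ξ) = 0 := by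
  refine Subtype.ext (funext fun p => ?_)
  exact deriv_const (coord (Sum.inr J) p) ((expL ξ : Fn N) p)

theorem DE_expL (i : Fin N) (ξ : Fin N → ℝ) : DE i (expL ξ) = ξ i • expL ξ := by
  have h := DL_apply i (expL ξ) ∅ fun J _ => PE_expL J ξ
  rw [Finset.sum_empty, add_zero] at h
  refine h.trans (Subtype.ext (funext fun p => ?_))
  have h1 : HasDerivAt (fun t => ∑ k, ξ k * Function.update p.1 i t k) (ξ i) (p.1 i) := by
    have := HasDerivAt.fun_sum (u := Finset.univ) fun k (_ : k ∈ Finset.univ) =>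
      ((hasDerivAt_pi.1 (hasDerivAt_update p.1 i (p.1 i))) k).const_mul (ξ k)
    simpa [Pi.single_apply] using this
  have h2 := h1.exp.deriv
  rw [Function.update_eq_self] at h2
  exact h2.trans (mul_comm _ _)

theorem DP_expL (I : MI N) (ξ : Fin N → ℝ) : DP I (expL ξ) = (∏ i, ξ i ^ I i) • expL ξ := by
  induction I using MI.induction with
  | zero => simp [DP_zero]
  | step i I ih =>
    rw [DP_inc, Module.End.mul_apply, ih, map_smul, DE_expL, smul_smul]
    congr 1
    have h : ∀ k, ξ k ^ inc i I k = ξ k ^ I k * if k = i then ξ i else 1 := by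
      intro k
      by_cases hk : k = i
      · subst hk
        simp [inc, pow_succ]
      · simp [inc, hk]
    simp only [h, Finset.prod_mul_distrib, Finset.prod_ite_eq', Finset.mem_univ, if_true]

/-- The jet monomial `Π_J u_J^{α(J)}`. -/
noncomputable def mon (α : MI N →₀ ℕ) : Loc N := α.prod fun J n => U J ^ n

theorem mon_add_single (α : MI N →₀ ℕ) (J : MI N) :
    mon (α + Finsupp.single J 1) = mon α * U J := by
  classical
  rw [mon, Finsupp.prod_add_index' (by simp) (by simp [pow_add])]
  simp [mon]

theorem PE_mon (J : MI N) (γ : MI N →₀ ℕ) :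
    PE J (mon γ) = γ J • mon (γ - Finsupp.single J 1) := by
  classical
  induction γ using finsupp_induction with
  | zero =>
    have : mon (0 : MI N →₀ ℕ) = 1 := by simp [mon]
    rw [this]
    exact (pdL (Sum.inr J)).map_one_eq_zero.trans (by simp)
  | step γ K ih =>
    have hU : PE J (U K) = if J = K then 1 else 0 := (pdL_U _ K).trans (by simp)
    rw [mon_add_single, PE_leibniz, ih, hU]
    by_cases h : J = K
    · subst h
      rw [add_tsub_cancel_right, Finsupp.add_apply, Finsupp.single_eq_same, add_smul, one_smul,
        if_pos rfl, mul_one, smul_mul_assoc, ← mon_add_single]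
      by_cases h0 : γ J = 0
      · rw [h0, zero_smul, zero_smul]
      · rw [tsub_add_cancel_of_le (by simpa using Nat.one_le_iff_ne_zero.2 h0)]
    · rw [if_neg h, mul_zero, add_zero, Finsupp.add_apply, Finsupp.single_eq_of_ne h, add_zero,
        smul_mul_assoc, ← mon_add_single]
      by_cases h0 : γ J = 0
      · rw [h0, zero_smul, zero_smul]
      · rw [tsub_add_eq_add_tsub (by simpa using Nat.one_le_iff_ne_zero.2 h0)]

/-- Vertical derivatives of the test functions `e^{ξ·x} u^γ`: `(∂/∂u)^β` gives a multiple of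
`e^{ξ·x} u^{γ-β}`, which is non-zero exactly if `β ≤ γ`. -/
theorem UP_test (ξ : Fin N → ℝ) (β γ : MI N →₀ ℕ) :
    ∃ k : ℕ, UP β (expL ξ * mon γ) = k • (expL ξ * mon (γ - β)) ∧ (k ≠ 0 ↔ β ≤ γ) := by
  induction β using finsupp_induction generalizing γ with
  | zero => exact ⟨1, by simp [UP_zero], by simp⟩
  | step β J ih =>
    obtain ⟨k, hk, hk'⟩ := ih (γ - Finsupp.single J 1)
    refine ⟨γ J * k, ?_, ?_⟩
    · rw [UP_add_single, Module.End.mul_apply, PE_leibniz, PE_expL, PE_mon, zero_mul, zero_add,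
        mul_smul_comm, map_nsmul, hk, mul_smul, tsub_tsub, add_comm β]
    · rw [mul_ne_zero_iff, hk']
      constructor
      · rintro ⟨h0, h1⟩
        exact (le_tsub_iff_right (by simpa using Nat.one_le_iff_ne_zero.2 h0)).1 h1
      · intro h
        have h0 : Finsupp.single J 1 ≤ γ := le_trans le_add_self h
        refine ⟨Nat.one_le_iff_ne_zero.1 (by simpa using h0), (le_tsub_iff_right h0).2 h⟩

/-- An operator in total derivatives which kills all exponentials has zero coefficients: at each
point, its value on `e^{ξ·x}` is a multiple of the polynomial `Σ_I p_I ξ^I`. -/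
theorem Op₁_eq_zero {c : Col N} (h : ∀ ξ, Op₁ c (expL ξ) = 0) : c = 0 := by
  classical
  refine Finsupp.ext fun I => Subtype.ext (funext fun p => ?_)
  set P : MvPolynomial (Fin N) ℝ :=
    ∑ I ∈ c.support, MvPolynomial.monomial (Finsupp.equivFunOnFinite.symm I) ((c I : Fn N) p)
    with hP
  have hP0 : P = 0 := by
    refine MvPolynomial.funext fun ξ => ?_
    have h1 := congrFun (congrArg Subtype.val (h ξ)) p
    rw [Op₁_apply, Finsupp.sum] at h1
    simp only [DP_expL] at h1
    have h2 : (∑ I ∈ c.support, (c I : Fn N) p * ∏ i, ξ i ^ I i) * (expL ξ : Fn N) p = 0 := by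
      refine Eq.trans ?_ h1
      rw [Finset.sum_mul]
      simp only [AddSubmonoidClass.coe_finsetSum, Finset.sum_apply]
      refine Finset.sum_congr rfl fun I _ => ?_
      exact mul_assoc _ _ _
    have h3 : (expL ξ : Fn N) p ≠ 0 := (Real.exp_pos _).ne'
    rw [map_zero, hP, map_sum]
    simp only [MvPolynomial.eval_monomial]
    rw [← (mul_eq_zero.1 h2).resolve_right h3]
    refine Finset.sum_congr rfl fun I _ => ?_
    rw [Finsupp.prod_fintype _ _ (by simp)]
    rfl
  have h4 := congrArg (MvPolynomial.coeff (Finsupp.equivFunOnFinite.symm I)) hP0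
  rw [hP, MvPolynomial.coeff_sum] at h4
  simp only [MvPolynomial.coeff_monomial, EmbeddingLike.apply_eq_iff_eq, Finset.sum_ite_eq',
    MvPolynomial.coeff_zero] at h4
  by_cases hI : I ∈ c.support
  · rwa [if_pos hI] at h4
  · rw [Finsupp.notMem_support_iff.1 hI]
    rfl

/-- The zero operator has zero coefficients. By induction on the degree of `α`, applying the
operator to `e^{ξ·x} u^α` leaves only the column of `α`. -/
theorem Real'_eq_zero {c : Dat N} (h : Real' c = 0) : c = 0 := by
  refine Subtype.ext (funext fun α => ?_)
  change c.1 α = 0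
  induction hn : α.degree using Nat.strong_induction_on generalizing α with
  | _ n ih =>
    refine Op₁_eq_zero fun ξ => ?_
    have h1 : Real' c (expL ξ * mon α) = 0 := by rw [h, LinearMap.zero_apply]
    rw [Real'_apply, finsum_eq_single _ α] at h1
    · obtain ⟨k, hk, hk'⟩ := UP_test ξ α α
      have hk0 : k ≠ 0 := hk'.2 le_rfl
      have hm : mon (0 : MI N →₀ ℕ) = 1 := by simp [mon]
      rw [hk, tsub_self, hm, mul_one, map_nsmul, ← Nat.cast_smul_eq_nsmul ℝ] at h1
      exact ((Nat.cast_ne_zero.2 hk0).isUnit.smul_eq_zero).1 h1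
    · intro β hβ
      obtain ⟨k, hk, hk'⟩ := UP_test ξ β α
      by_cases hle : β ≤ α
      · have hdeg : β.degree < n := by
          have h2 : α.degree = β.degree + (α - β).degree := by
            rw [← map_add, add_tsub_cancel_of_le hle]
          have h3 : (α - β).degree ≠ 0 := by
            rw [ne_eq, Finsupp.degree_eq_zero_iff, tsub_eq_zero_iff_le]
            exact fun h => hβ (le_antisymm hle h)
          omega
        rw [ih _ hdeg β rfl, map_zero, LinearMap.zero_apply]
      · rw [hk, not_not.1 fun h0 => hle (hk'.1 h0), zero_smul, map_zero]

/-- A local differential operator determines its coefficients. -/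
theorem Real'_injective : Injective (Real' (N := N)) := fun c d h => by
  have h1 : Real' (c + (-1 : ℝ) • d) = 0 := by
    rw [map_add, map_smul, h]
    refine LinearMap.ext fun f => Subtype.ext (funext fun p => ?_)
    change (Real' d f : Fn N) p + (-1 : ℝ) * (Real' d f : Fn N) p = 0
    ring
  have h2 := Real'_eq_zero h1
  refine Subtype.ext (funext fun α => Finsupp.ext fun I => Subtype.ext (funext fun p => ?_))
  have h3 : (c.1 α I : Fn N) p + (-1 : ℝ) * (d.1 α I : Fn N) p = 0 :=
    congrArg (fun e : Dat N => (e.1 α I : Fn N) p) h2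
  linarith

end Uniqueness

/-! ### Comparison with the coefficient data of the statement -/

section Bridge

open Function

variable {N : ℕ}

/-- Evaluation of a local function at a point. -/
def evL (pt : JetPt N) : Loc N →+ ℝ where
  toFun f := (f : Fn N) pt
  map_zero' := rfl
  map_add' _ _ := rfl

/-- The index set of unary coefficient data is that of pairs `(α, I)`. -/
def idxEquiv (N : ℕ) : (MI N →₀ ℕ) × MI N ≃ Idx N 1 where
  toFun x := (fun _ => x.2, fun _ => x.1)
  invFun Iα := (Iα.2 0, Iα.1 0)
  left_inv _ := rfl
  right_inv Iα := Prod.ext (funext fun _ => congrArg Iα.1 (Subsingleton.elim _ _))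
    (funext fun _ => congrArg Iα.2 (Subsingleton.elim _ _))

/-- The coefficient data underlying `c : Dat N`. -/
def fromDat (c : Dat N) : OpData N 1 := fun Iα => (c.1 (Iα.2 0) (Iα.1 0) : Fn N)

theorem good_fromDat (c : Dat N) : Good (fromDat c) := by
  refine ⟨fun Iα => (c.1 (Iα.2 0) (Iα.1 0)).2, fun m => ?_⟩
  refine ((c.2 m).biUnion fun α _ => ((c.1 α).support.finite_toSet.image fun I =>
    idxEquiv N (α, I))).subset ?_
  rintro Iα ⟨h, hdeg⟩
  obtain ⟨⟨α, I⟩, rfl⟩ := (idxEquiv N).surjective Iα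
  have h1 : c.1 α I ≠ 0 := fun h0 => h (congrArg Subtype.val h0)
  have h2 : degf α ≤ m := by simpa [idxEquiv] using hdeg
  refine Set.mem_biUnion (x := α) ⟨fun h0 => h1 (by rw [h0]; rfl), h2⟩ ⟨I, ?_, rfl⟩
  simpa using h1

/-- Admissible unary coefficient data come from `Dat N`. -/
theorem exists_fromDat {q : OpData N 1} (hq : Good q) : ∃ c : Dat N, fromDat c = q := by
  have hfin : ∀ α : MI N →₀ ℕ,
      (support fun I => (⟨q (idxEquiv N (α, I)), hq.1 _⟩ : Loc N)).Finite := by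
    intro α
    refine ((hq.2 (degf α)).preimage ((idxEquiv N).injective.comp
      (Prod.mk_right_injective α)).injOn).subset fun I hI => ⟨fun h => hI ?_, ?_⟩
    · exact Subtype.ext h
    · simp [idxEquiv]
  refine ⟨⟨fun α => Finsupp.ofSupportFinite _ (hfin α), fun m => ?_⟩, ?_⟩
  · refine ((hq.2 m).image fun Iα => Iα.2 0).subset ?_
    rintro α ⟨h, hdeg⟩
    obtain ⟨I, hI⟩ := Finsupp.ne_iff.1 h
    refine ⟨idxEquiv N (α, I), ⟨fun h0 => hI (Subtype.ext h0), ?_⟩, rfl⟩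
    simpa [idxEquiv] using hdeg
  · funext Iα
    exact congrArg q ((idxEquiv N).right_inv Iα)

theorem realizeP_fromDat (c : Dat N) (f : Loc N) :
    realizeP (fromDat c) (fun _ => (f : Fn N)) = (Real' c f : Fn N) := by
  classical
  funext pt
  set G : (MI N →₀ ℕ) × MI N → Loc N := fun x => c.1 x.1 x.2 * DP x.2 (UP x.1 f) with hG
  have hGfin : (support G).Finite := by
    refine ((Dat_finite c f).biUnion fun α _ => ((c.1 α).support.finite_toSet.image fun I =>
      (α, I))).subset ?_
    rintro ⟨α, I⟩ h
    have h1 : c.1 α I ≠ 0 := fun h0 => h (by simp [hG, h0])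
    refine Set.mem_biUnion (x := α) ⟨fun h0 => h1 (by rw [h0]; rfl),
      fun h0 => h (by simp [hG, h0])⟩ ⟨I, ?_, rfl⟩
    simpa using h1
  have h1 : Real' c f = ∑ᶠ x, G x := by
    rw [finsum_curry G hGfin, Real'_apply]
    refine finsum_congr fun α => ?_
    rw [Op₁_apply, Finsupp.sum, finsum_eq_sum_of_support_subset]
    intro I hI
    simp only [Finset.mem_coe, Finsupp.mem_support_iff]
    exact fun h0 => hI (by simp [hG, h0])
  have h2 : (Real' c f : Fn N) pt = ∑ᶠ x, evL pt (G x) := by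
    rw [← map_finsum (evL pt) hGfin, ← h1]
    rfl
  have h3 : (support fun x => evL pt (G x)).Finite :=
    hGfin.subset fun x hx h0 => hx (by simp [h0])
  rw [h2, ← tsum_eq_finsum (L := SummationFilter.unconditional _) h3, realizeP, ← (idxEquiv N).tsum_eq]
  refine tsum_congr fun x => ?_
  have h4 : (fun p => ∏ j : Fin 1, if j = (0 : Fin 1) then UPow x.1 (f : Fn N) p
      else DPow x.2 (UPow x.1 (f : Fn N)) p) = (UP x.1 f : Fn N) := by
    funext p
    simp [UP_coe]
  change (c.1 x.1 x.2 : Fn N) pt * DPow x.2 (fun p => ∏ j : Fin 1, if j = (0 : Fin 1) then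
    UPow x.1 (f : Fn N) p else DPow x.2 (UPow x.1 (f : Fn N)) p) pt = _
  rw [h4, ← DP_coe]
  rfl

theorem chiData_fromDat (c : Dat N) : chiData (fromDat c) = fromDat (chiDat c) := by
  classical
  funext Iα pt
  obtain ⟨⟨α, I⟩, rfl⟩ := (idxEquiv N).surjective Iα
  change (if I = 0 then fun pt => ∑' K : MI N, (-1 : ℝ) ^ (∑ i, K i) *
    DPow K (c.1 α (update (fun _ : Fin 1 => I) 0 K 0) : Fn N) pt else 0) pt
      = (Finsupp.single 0 (chi₁ (c.1 α)) I : Fn N) pt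
  by_cases h : I = 0
  · subst h
    rw [if_pos rfl, Finsupp.single_eq_same]
    simp only [update_self, ← DP_coe]
    rw [tsum_eq_sum (s := (c.1 α).support)]
    · change _ = evL pt (chi₁ (c.1 α))
      rw [chi₁, Finsupp.lsum_apply, Finsupp.sum, map_sum]
      rfl
    · intro K hK
      rw [Finsupp.notMem_support_iff.1 hK, map_zero]
      exact mul_zero _
  · rw [if_neg h, Finsupp.single_eq_of_ne h]
    rfl

theorem fin_one_eta (f : Fin 1 → Fn N) : f = fun _ => f 0 :=
  funext fun _ => congrArg f (Subsingleton.elim _ _)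

theorem presents_fromDat {M : Fn N → Fn N} {c : Dat N} :
    Presents (fromDat c) (fun f : Fin 1 → Fn N => M (f 0)) ↔
      ∀ f : Loc N, M f = (Real' c f : Fn N) := by
  constructor
  · intro h f
    rw [← realizeP_fromDat]
    exact funext fun pt => h (fun _ => f) (fun _ => f.2) pt
  · intro h f hf pt
    rw [fin_one_eta f]
    exact congrFun ((h ⟨f 0, hf 0⟩).trans (realizeP_fromDat c ⟨f 0, hf 0⟩).symm) pt

/-- The local differential operators of the statement are the operators with data in `Dat N`. -/
theorem isPLDO_iff (M : Fn N → Fn N) :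
    (IsPLDO fun f : Fin 1 → Fn N => M (f 0)) ↔
      ∃ c : Dat N, ∀ f : Loc N, M f = (Real' c f : Fn N) := by
  constructor
  · rintro ⟨q, hq, hM⟩
    obtain ⟨c, rfl⟩ := exists_fromDat hq
    exact ⟨c, presents_fromDat.1 hM⟩
  · rintro ⟨c, hc⟩
    exact ⟨fromDat c, good_fromDat c, presents_fromDat.2 hc⟩

theorem chiZero_iff (M : Fn N → Fn N) :
    (ChiZero fun f : Fin 1 → Fn N => M (f 0)) ↔
      ∃ c : Dat N, (∀ f : Loc N, M f = (Real' c f : Fn N)) ∧ Real' (chiDat c) = 0 := by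
  constructor
  · rintro ⟨q, hq, hM, h0⟩
    obtain ⟨c, rfl⟩ := exists_fromDat hq
    refine ⟨c, presents_fromDat.1 hM, LinearMap.ext fun f => Subtype.ext ?_⟩
    rw [← realizeP_fromDat, ← chiData_fromDat]
    exact funext fun pt => h0 (fun _ => f) (fun _ => f.2) pt
  · rintro ⟨c, hM, h0⟩
    refine ⟨fromDat c, good_fromDat c, presents_fromDat.2 hM, fun f hf pt => ?_⟩
    rw [chiData_fromDat, fin_one_eta f]
    refine (congrFun (realizeP_fromDat (chiDat c) ⟨f 0, hf 0⟩) pt).trans ?_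
    rw [h0]
    rfl

end Bridge

/-! ### Horizontal forms -/

section Forms

open Function

variable {N : ℕ}

/-- As an operator determines its coefficients, `ChiZero` of `A ∘ d/dx^i` can be tested on the
explicit data `rDat i c`. -/
theorem chiZero_precomp (c : Dat N) (i : Fin N) :
    (ChiZero fun f : Fin 1 → Fn N => realizeP (fromDat c) fun _ => Dtot i (f 0)) ↔
      Real' (chiDat (rDat i c)) = 0 := by
  have key : ∀ f : Loc N, realizeP (fromDat c) (fun _ => Dtot i f) = (Real' (rDat i c) f : Fn N) := by
    intro f
    rw [Real'_rDat, Module.End.mul_apply, ← realizeP_fromDat, DE_coe]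
  rw [chiZero_iff fun g => realizeP (fromDat c) fun _ => Dtot i g]
  constructor
  · rintro ⟨d, hd, h0⟩
    have h : d = rDat i c :=
      Real'_injective <| LinearMap.ext fun f => Subtype.ext ((hd f).symm.trans (key f))
    rwa [← h]
  · exact fun h => ⟨rDat i c, key, h⟩

variable (N) in
/-- Horizontal forms with local coefficients. -/
abbrev LForm := (Fin N → Bool) → Loc N

/-- `d_H` on forms with local coefficients. -/
noncomputable def dL (ω : LForm N) : LForm N := fun δ =>
  ∑ i : Fin N, if δ i then (-1 : ℝ) ^ pos i δ • DE i (ω (update δ i false)) else 0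

theorem dH_coe (ω : LForm N) : dH (fun ε => (ω ε : Fn N)) = fun δ => (dL ω δ : Fn N) := by
  funext δ pt
  change _ = evL pt (dL ω δ)
  rw [dH, dL, map_sum]
  refine Finset.sum_congr rfl fun i _ => ?_
  by_cases h : δ i = true
  · rw [if_pos h, if_pos h]
    rfl
  · rw [if_neg h, if_neg h, map_zero]

/-- Application of a matrix of coefficient data to a form. -/
noncomputable def apL (C : (Fin N → Bool) → (Fin N → Bool) → Dat N) (ω : LForm N) : LForm N :=
  fun δ => ∑ ε, Real' (C ε δ) (ω ε)

theorem applyFO_coe {M : FormOp N} {C : (Fin N → Bool) → (Fin N → Bool) → Dat N}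
    (h : ∀ ε δ, ∀ f : Loc N, M ε δ f = (Real' (C ε δ) f : Fn N)) (ω : LForm N) :
    applyFO M (fun ε => (ω ε : Fn N)) = fun δ => (apL C ω δ : Fn N) := by
  funext δ pt
  change _ = evL pt (apL C ω δ)
  rw [applyFO, apL, map_sum]
  exact Finset.sum_congr rfl fun ε _ => congrFun (h ε δ (ω ε)) pt

variable (N) in
/-- The multidegree of the volume form. -/
def top : Fin N → Bool := fun _ => true

/-- The multidegree of the volume form with `dx^i` removed. -/
def face (i : Fin N) : Fin N → Bool := update (top N) i false

/-- The sign of `dx^i` in front of the complementary `(N-1)`-form. -/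
noncomputable def sgn (i : Fin N) : ℝ := (-1) ^ pos i (top N)

theorem sgn_mul_self (i : Fin N) : sgn i * sgn i = 1 := by
  rw [sgn, ← mul_pow]
  simp

theorem face_apply_eq_false {i k : Fin N} : face i k = false ↔ k = i := by
  by_cases h : k = i
  · simp [face, h]
  · simp [face, h, top]

theorem face_injective : Injective (face (N := N)) := fun i k h => by
  have : face k i = false := by rw [← h, face_apply_eq_false]
  exact face_apply_eq_false.1 this

theorem eq_of_update_eq_face {δ : Fin N → Bool} {i k : Fin N} (hδ : δ k = true)
    (h : update δ k false = face i) : k = i ∧ δ = top N := by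
  have hk : k = i := face_apply_eq_false.1 (by rw [← h, update_self])
  refine ⟨hk, funext fun l => ?_⟩
  by_cases hl : l = k
  · rw [hl, hδ]
    rfl
  · have := congrFun h l
    rw [update_of_ne hl, ← hk, face, update_of_ne hl] at this
    exact this

theorem wt_add_card (ε : Fin N → Bool) :
    wt ε + (Finset.univ.filter fun k => ε k = false).card = N := by
  have h := Finset.card_filter_add_card_filter_not (s := (Finset.univ : Finset (Fin N)))
    fun k => ε k = true
  simp only [Finset.card_univ, Fintype.card_fin, Bool.not_eq_true] at h
  rw [wt, ← Finset.card_filter]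
  exact h

theorem wt_face (i : Fin N) : wt (face i) + 1 = N := by
  have h := wt_add_card (face i)
  simp only [face_apply_eq_false, Finset.filter_eq', Finset.mem_univ, if_true,
    Finset.card_singleton] at h
  exact h

theorem eq_face {ε : Fin N → Bool} {i : Fin N} (h : wt ε + 1 = N) (hi : ε i = false) :
    ε = face i := by
  have h1 := wt_add_card ε
  obtain ⟨a, ha⟩ := Finset.card_eq_one.1 (show (Finset.univ.filter fun k => ε k = false).card = 1
    by omega)
  have h2 : ∀ k, ε k = false ↔ k = a := fun k => by
    simpa using congrArg (k ∈ ·) ha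
  obtain rfl := (h2 i).1 hi
  funext k
  by_cases hk : k = i
  · rw [hk, hi]
    simp [face]
  · have := (h2 k).not.2 hk
    rw [face, update_of_ne hk]
    simpa [top] using this

theorem dL_top (ω : LForm N) : dL ω (top N) = ∑ i, sgn i • DE i (ω (face i)) := rfl

/-- Removing `dx^i` from the volume form changes the position of `dx^k` by one exactly if `i < k`. -/
theorem pos_face (i k : Fin N) : pos k (face i) + (if i < k then 1 else 0) = pos k (top N) := by
  have h : (if i < k then 1 else 0) = ∑ l, if l = i then (if i < k then 1 else 0) else 0 := by
    simp
  rw [pos, pos, h, ← Finset.sum_add_distrib]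
  refine Finset.sum_congr rfl fun l _ => ?_
  by_cases hl : l = i
  · subst hl
    simp [face, top]
  · simp [face, hl, top]

theorem sgn_face (i k : Fin N) :
    (-1 : ℝ) ^ pos k (face i) = sgn k * if i < k then -1 else 1 := by
  rw [sgn, ← pos_face i k]
  split_ifs <;> simp [pow_succ]

/-- `d_H ∘ d_H = 0` in top degree. -/
theorem dL_dL_top (ω : LForm N) : ∑ i, sgn i • DE i (dL ω (face i)) = 0 := by
  set T : Fin N → Fin N → Loc N := fun i k => if k = i then 0 else
    (sgn i * (sgn k * if i < k then -1 else 1)) • DE i (DE k (ω (update (face i) k false)))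
    with hT
  have h1 : ∀ i, sgn i • DE i (dL ω (face i)) = ∑ k, T i k := by
    intro i
    rw [dL, map_sum, Finset.smul_sum]
    refine Finset.sum_congr rfl fun k _ => ?_
    by_cases hk : k = i
    · have : ¬ face i k = true := by simp [face_apply_eq_false.2 hk]
      simp [hT, hk, face]
    · have : face i k = true := by
        rw [← Bool.not_eq_false, face_apply_eq_false]
        exact hk
      simp only [hT, if_neg hk, if_pos this, sgn_face, map_smul, smul_smul]
  have h2 : ∀ i k, T k i = - T i k := by
    intro i k
    by_cases hk : k = i
    · simp [hT, hk]
    · have hk' : i ≠ k := Ne.symm hk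
      have e1 : update (face k) i false = update (face i) k false := update_comm hk _ _ _
      have e2 : DE k (DE i (ω (update (face i) k false)))
          = DE i (DE k (ω (update (face i) k false))) := LinearMap.congr_fun (DE_comm k i) _
      simp only [hT, if_neg hk, if_neg hk', e1, e2, ← neg_smul]
      congr 1
      rcases lt_or_gt_of_ne hk with h | h
      · rw [if_pos h, if_neg h.not_gt]
        ring
      · rw [if_pos h, if_neg h.not_gt]
        ring
  rw [Finset.sum_congr rfl fun i _ => h1 i]
  set S := ∑ i, ∑ k, T i k with hS
  have h3 : S = -S := by
    conv_lhs => rw [hS, Finset.sum_comm]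
    rw [hS, ← Finset.sum_neg_distrib]
    refine Finset.sum_congr rfl fun i _ => ?_
    rw [← Finset.sum_neg_distrib]
    exact Finset.sum_congr rfl fun k _ => h2 i k
  have h4 : (2 : ℝ) • S = 0 := by
    rw [two_smul]
    nth_rewrite 1 [h3]
    exact neg_add_cancel S
  exact (IsUnit.mk0 (2 : ℝ) two_ne_zero).smul_eq_zero.1 h4

end Forms

/-! ### Lifting -/

section Lifting

open Function

variable {N : ℕ}

/-- The lift in degree `N - 1`: if `A = χ(A) + Σ_j d/dx^j ∘ B_j`, the diagonal operator `χ(A)` is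
corrected by the operators `± B_j ∘ d/dx^i` from the `i`-th to the `j`-th face. -/
noncomputable def corr (b : Fin N → Dat N) (ε δ : Fin N → Bool) : Dat N :=
  ∑ i, ∑ j, if ε = face i ∧ δ = face j then (sgn i * sgn j) • rDat i (b j) else 0

/-- The lift of the operator `A` with data `c`, given the operators `B_j` of an integration by parts:
`A` itself in degree `N`, and below it `χ(A)` acting diagonally, with the correction `corr` in
degree `N - 1`. -/
noncomputable def lift (c : Dat N) (b : Fin N → Dat N) (s : ℕ) (ε δ : Fin N → Bool) : Dat N :=
  if s = N then (if ε = top N ∧ δ = top N then c else 0)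
  else (if ε = δ then chiDat c else 0) + if s + 1 = N then corr b ε δ else 0

/-- The lift in degree `N`. -/
theorem apL_lift_top (c : Dat N) (b : Fin N → Dat N) (ω : LForm N) (δ : Fin N → Bool) :
    apL (lift c b N) ω δ = if δ = top N then Real' c (ω (top N)) else 0 := by
  rw [apL, Finset.sum_eq_single (top N)]
  · by_cases h : δ = top N <;> simp [lift, h]
  · intro ε _ hε
    simp [lift, hε]
  · simp

/-- The lift in degrees other than `N`. -/
theorem apL_lift_of_ne (c : Dat N) (b : Fin N → Dat N) {s : ℕ} (hs : s ≠ N) (ω : LForm N)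
    (δ : Fin N → Bool) : apL (lift c b s) ω δ = Real' (chiDat c) (ω δ)
      + if s + 1 = N then apL (corr b) ω δ else 0 := by
  have h : ∀ ε, Real' (lift c b s ε δ) (ω ε) = (if ε = δ then Real' (chiDat c) (ω ε) else 0)
      + if s + 1 = N then Real' (corr b ε δ) (ω ε) else 0 := by
    intro ε
    rw [lift, if_neg hs, map_add, LinearMap.add_apply]
    congr 1 <;> split_ifs <;> simp
  rw [apL, Finset.sum_congr rfl fun ε _ => h ε, Finset.sum_add_distrib]
  congr 1
  · simp
  · split_ifs
    · rfl
    · simp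

theorem apL_corr_face (b : Fin N → Dat N) (ω : LForm N) (j : Fin N) :
    apL (corr b) ω (face j) = sgn j • Real' (b j) (∑ i, sgn i • DE i (ω (face i))) := by
  have h : ∀ ε, Real' (corr b ε (face j)) (ω ε) = ∑ i, if ε = face i then
      (sgn i * sgn j) • Real' (b j) (DE i (ω ε)) else 0 := by
    intro ε
    rw [corr, map_sum, LinearMap.sum_apply]
    refine Finset.sum_congr rfl fun i _ => ?_
    rw [Finset.sum_eq_single j]
    · by_cases hi : ε = face i
      · rw [if_pos ⟨hi, rfl⟩, if_pos hi, map_smul, Real'_rDat]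
        rfl
      · rw [if_neg fun h => hi h.1, if_neg hi, map_zero, LinearMap.zero_apply]
    · intro k _ hk
      exact if_neg fun h => hk (face_injective h.2).symm
    · simp
  rw [apL, Finset.sum_congr rfl fun ε _ => h ε, Finset.sum_comm, map_sum, Finset.smul_sum]
  refine Finset.sum_congr rfl fun i _ => ?_
  rw [Finset.sum_ite_eq' Finset.univ (face i), if_pos (Finset.mem_univ _), map_smul, smul_smul,
    mul_comm]

theorem apL_corr_of_ne (b : Fin N → Dat N) (ω : LForm N) {δ : Fin N → Bool}
    (hδ : ∀ j, δ ≠ face j) : apL (corr b) ω δ = 0 := by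
  refine Finset.sum_eq_zero fun ε _ => ?_
  have h : corr b ε δ = 0 :=
    Finset.sum_eq_zero fun i _ => Finset.sum_eq_zero fun j _ => if_neg fun h => hδ j h.2
  rw [h, map_zero, LinearMap.zero_apply]

/-- An operator commuting with all `d/dx^i` commutes with `d_H`. -/
theorem dL_comm {X : Module.End ℝ (Loc N)} (hX : ∀ i, X * DE i = DE i * X) (ω : LForm N)
    (δ : Fin N → Bool) : dL (fun ε => X (ω ε)) δ = X (dL ω δ) := by
  rw [dL, dL, map_sum]
  refine Finset.sum_congr rfl fun i _ => ?_
  by_cases h : δ i = true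
  · rw [if_pos h, if_pos h, map_smul, ← Module.End.mul_apply, ← hX i, Module.End.mul_apply]
  · rw [if_neg h, if_neg h, map_zero]

/-- The lift is a chain map if `χ(A)` commutes with all `d/dx^i`. In degree `N - 2` the correction in
degree `N - 1` vanishes on exact forms. -/
theorem dL_lift {c : Dat N} {b : Fin N → Dat N} (hc : c = chiDat c + ∑ j, lDat j (b j))
    (hX : ∀ i, Real' (chiDat c) * DE i = DE i * Real' (chiDat c)) {s : ℕ} (hs : s + 1 ≤ N)
    (ω : LForm N) (hω : ∀ ε, wt ε ≠ s → ω ε = 0) (δ : Fin N → Bool) :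
    dL (apL (lift c b s) ω) δ = apL (lift c b (s + 1)) (dL ω) δ := by
  have hsN : s ≠ N := by omega
  rcases hs.eq_or_lt with h | h
  · subst h
    rw [apL_lift_top]
    by_cases hδ : δ = top (s + 1)
    · subst hδ
      have hA : ∀ f, Real' c f = Real' (chiDat c) f + ∑ j, DE j (Real' (b j) f) := by
        intro f
        conv_lhs => rw [hc, map_add, map_sum, LinearMap.add_apply, LinearMap.sum_apply]
        simp only [Real'_lDat, Module.End.mul_apply]
      rw [if_pos rfl, hA, ← dL_comm hX, dL_top, dL_top, dL_top, ← Finset.sum_add_distrib]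
      refine Finset.sum_congr rfl fun j _ => ?_
      rw [apL_lift_of_ne c b hsN, if_pos rfl, apL_corr_face, map_add, smul_add, map_smul,
        smul_smul, sgn_mul_self, one_smul]
    · rw [if_neg hδ]
      refine Finset.sum_eq_zero fun i _ => ?_
      by_cases hi : δ i = true
      · have h1 : ∀ j, update δ i false ≠ face j :=
          fun j h => hδ (eq_of_update_eq_face hi h).2
        have h2 : ω (update δ i false) = 0 :=
          hω _ fun h => h1 i (eq_face (by rw [h]) (update_self _ _ _))
        rw [if_pos hi, apL_lift_of_ne c b hsN, if_pos rfl, apL_corr_of_ne b ω h1, h2, map_zero,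
          add_zero, map_zero, smul_zero]
      · rw [if_neg hi]
  · have hs1 : s + 1 ≠ N := by omega
    have h1 : apL (lift c b s) ω = fun ε => Real' (chiDat c) (ω ε) := by
      funext ε
      rw [apL_lift_of_ne c b hsN, if_neg hs1, add_zero]
    have h2 : apL (corr b) (dL ω) δ = 0 := by
      by_cases hδ : ∃ j, δ = face j
      · obtain ⟨j, rfl⟩ := hδ
        rw [apL_corr_face, dL_dL_top, map_zero, smul_zero]
      · push Not at hδ
        exact apL_corr_of_ne b _ hδ
    rw [h1, dL_comm hX, apL_lift_of_ne c b hs1, h2, ite_self, add_zero]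

/-- A lift to degree `N - 1`, applied to the forms with a single coefficient `f` at `face i`, writes
`A ∘ d/dx^i` as a sum of operators `d/dx^k ∘ B`, whose characteristic vanishes. -/
theorem chi_eq_zero_of_lift {c : Dat N} {C : ℕ → (Fin N → Bool) → (Fin N → Bool) → Dat N}
    (htop : ∀ f : Loc N, apL (C N) (fun ε => if ε = top N then f else 0) (top N) = Real' c f)
    (hcomm : ∀ s, s + 1 = N → ∀ ω : LForm N, (∀ ε, wt ε ≠ s → ω ε = 0) →
      dL (apL (C s) ω) (top N) = apL (C (s + 1)) (dL ω) (top N)) (i : Fin N) :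
    Real' (chiDat (rDat i c)) = 0 := by
  set s := wt (face i)
  have hs : s + 1 = N := wt_face i
  have key : rDat i c = ∑ k, (sgn i * sgn k) • lDat k (C s (face i) (face k)) := by
    refine Real'_injective (LinearMap.ext fun f => ?_)
    set ω : LForm N := fun ε => if ε = face i then f else 0 with hω
    have h1 : dL ω = fun ε => if ε = top N then sgn i • DE i f else 0 := by
      funext δ
      by_cases hδ : δ = top N
      · subst hδ
        rw [if_pos rfl, dL_top, Finset.sum_eq_single i]
        · rw [hω]
          simp only [if_true]
        · intro k _ hk
          rw [hω]
          simp only [if_neg fun h => hk (face_injective h), map_zero, smul_zero]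
        · simp
      · rw [if_neg hδ]
        refine Finset.sum_eq_zero fun k _ => ?_
        by_cases hk : δ k = true
        · rw [if_pos hk, hω]
          simp only [if_neg fun h => hδ (eq_of_update_eq_face hk h).2, map_zero, smul_zero]
        · rw [if_neg hk]
    have h2 : ∀ δ, apL (C s) ω δ = Real' (C s (face i) δ) f := by
      intro δ
      rw [apL, Finset.sum_eq_single (face i)]
      · rw [hω]
        simp only [if_true]
      · intro ε _ hε
        rw [hω]
        simp only [if_neg hε, map_zero]
      · simp
    have h3 := hcomm s hs ω fun ε hε => if_neg fun h => hε (by rw [h])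
    rw [h1, hs, htop, dL_top] at h3
    simp only [h2, map_smul] at h3
    rw [Real'_rDat, Module.End.mul_apply, map_sum, LinearMap.sum_apply,
      ← one_smul ℝ (Real' c (DE i f)), ← sgn_mul_self i, mul_smul, ← h3, Finset.smul_sum]
    refine Finset.sum_congr rfl fun k _ => ?_
    rw [smul_smul, map_smul, LinearMap.smul_apply, Real'_lDat, Module.End.mul_apply]
  rw [key, map_sum]
  simp only [map_smul, chiDat_lDat, smul_zero, Finset.sum_const_zero, map_zero]

theorem coe_ite_form (f : Loc N) :
    (fun ε : Fin N → Bool => if ε = (fun _ => true) then (f : Fn N) else 0) =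
      fun ε => ((if ε = top N then f else 0 : Loc N) : Fn N) := by
  funext ε
  by_cases h : ε = top N
  · rw [if_pos h]
    exact if_pos h
  · rw [if_neg h]
    exact if_neg h

end Lifting

/-- A local differential operator `A_N : Ω^{N,0} → Ω^{N,0}` (given by
polarized coefficient data `q`) lifts to a sequence of local differential operators
`A_s : Ω^{s,0} → Ω^{s,0}` with `d_H ∘ A_s = A_{s+1} ∘ d_H` (`0 ≤ s ≤ N−1`) if and only if
`χ(A_N ∘ d/dx^i) = 0` for all `1 ≤ i ≤ N`; moreover in that case the lift can be chosen so
that for `0 ≤ s ≤ N−2` the operator `A_s` acts diagonally by `χ(A_N)`. -/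
theorem lifting_horizontal {N : ℕ} (q : OpData N 1) (hq : Good q) :
    ((∃ M : ℕ → FormOp N,
        (∀ s ε δ, IsPLDO fun f : Fin 1 → Fn N => M s ε δ (f 0)) ∧
        (∀ f : Fn N, IsLocal f → ∀ δ pt,
          applyFO (M N) (fun ε => if ε = (fun _ => true) then f else 0) δ pt =
            if δ = (fun _ => true) then realizeP q (fun _ => f) pt else 0) ∧
        (∀ s, s + 1 ≤ N → ∀ ω : Form N, (∀ ε, IsLocal (ω ε)) →
          (∀ ε, wt ε ≠ s → ω ε = 0) → ∀ δ pt,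
            dH (applyFO (M s) ω) δ pt = applyFO (M (s + 1)) (dH ω) δ pt)) ↔
      (∀ i : Fin N, ChiZero fun f : Fin 1 → Fn N => realizeP q fun _ => Dtot i (f 0))) ∧
    ((∀ i : Fin N, ChiZero fun f : Fin 1 → Fn N => realizeP q fun _ => Dtot i (f 0)) →
      ∃ M : ℕ → FormOp N,
        (∀ s ε δ, IsPLDO fun f : Fin 1 → Fn N => M s ε δ (f 0)) ∧
        (∀ f : Fn N, IsLocal f → ∀ δ pt,
          applyFO (M N) (fun ε => if ε = (fun _ => true) then f else 0) δ pt =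
            if δ = (fun _ => true) then realizeP q (fun _ => f) pt else 0) ∧
        (∀ s, s + 1 ≤ N → ∀ ω : Form N, (∀ ε, IsLocal (ω ε)) →
          (∀ ε, wt ε ≠ s → ω ε = 0) → ∀ δ pt,
            dH (applyFO (M s) ω) δ pt = applyFO (M (s + 1)) (dH ω) δ pt) ∧
        (∀ s, s + 2 ≤ N → ∀ ω : Form N, (∀ ε, IsLocal (ω ε)) →
          (∀ ε, wt ε ≠ s → ω ε = 0) → ∀ δ pt,
            applyFO (M s) ω δ pt = realizeP (chiData q) (fun _ => ω δ) pt)) := by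
  obtain ⟨c, rfl⟩ := exists_fromDat hq
  have hback : (∀ i : Fin N, ChiZero fun f : Fin 1 → Fn N =>
      realizeP (fromDat c) fun _ => Dtot i (f 0)) →
      ∃ M : ℕ → FormOp N,
        (∀ s ε δ, IsPLDO fun f : Fin 1 → Fn N => M s ε δ (f 0)) ∧
        (∀ f : Fn N, IsLocal f → ∀ δ pt,
          applyFO (M N) (fun ε => if ε = (fun _ => true) then f else 0) δ pt =
            if δ = (fun _ => true) then realizeP (fromDat c) (fun _ => f) pt else 0) ∧
        (∀ s, s + 1 ≤ N → ∀ ω : Form N, (∀ ε, IsLocal (ω ε)) →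
          (∀ ε, wt ε ≠ s → ω ε = 0) → ∀ δ pt,
            dH (applyFO (M s) ω) δ pt = applyFO (M (s + 1)) (dH ω) δ pt) ∧
        (∀ s, s + 2 ≤ N → ∀ ω : Form N, (∀ ε, IsLocal (ω ε)) →
          (∀ ε, wt ε ≠ s → ω ε = 0) → ∀ δ pt,
            applyFO (M s) ω δ pt = realizeP (chiData (fromDat c)) (fun _ => ω δ) pt) := by
    intro h
    have hX := fun i => chi_comm ((chiZero_precomp c i).1 (h i))
    obtain ⟨b, hb⟩ := exists_parts c
    set M : ℕ → FormOp N := fun s ε δ f => realizeP (fromDat (lift c b s ε δ)) fun _ => f with hM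
    have hMC : ∀ s ε δ, ∀ f : Loc N, M s ε δ f = (Real' (lift c b s ε δ) f : Fn N) :=
      fun s ε δ f => realizeP_fromDat _ f
    refine ⟨M, fun s ε δ => (isPLDO_iff (M s ε δ)).2 ⟨_, hMC s ε δ⟩, ?_, ?_, ?_⟩
    · intro f hf δ pt
      obtain ⟨f, rfl⟩ : ∃ g : Loc N, (g : Fn N) = f := ⟨⟨f, hf⟩, rfl⟩
      rw [coe_ite_form, applyFO_coe (hMC N), realizeP_fromDat]
      beta_reduce
      rw [apL_lift_top]
      by_cases hδ : δ = top N
      · rw [if_pos hδ, if_pos (show δ = fun _ => true from hδ), if_pos rfl]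
      · rw [if_neg hδ, if_neg (show ¬ δ = fun _ => true from hδ)]
        rfl
    · intro s hs ω hω h0 δ pt
      obtain ⟨ω, rfl⟩ : ∃ η : LForm N, (fun ε => (η ε : Fn N)) = ω := ⟨fun ε => ⟨ω ε, hω ε⟩, rfl⟩
      rw [applyFO_coe (hMC s), dH_coe, dH_coe, applyFO_coe (hMC (s + 1))]
      beta_reduce
      rw [dL_lift hb hX hs ω fun ε hε => Subtype.ext (h0 ε hε)]
    · intro s hs ω hω _ δ pt
      obtain ⟨ω, rfl⟩ : ∃ η : LForm N, (fun ε => (η ε : Fn N)) = ω := ⟨fun ε => ⟨ω ε, hω ε⟩, rfl⟩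
      rw [applyFO_coe (hMC s), chiData_fromDat, realizeP_fromDat]
      beta_reduce
      rw [apL_lift_of_ne c b (show s ≠ N by omega), if_neg (show s + 1 ≠ N by omega), add_zero]
  refine ⟨⟨?_, fun h => ?_⟩, hback⟩
  · rintro ⟨M, hM, htop, hcomm⟩ i
    rw [chiZero_precomp]
    have hM' := fun s ε δ => (isPLDO_iff (M s ε δ)).1 (hM s ε δ)
    choose C hC using hM'
    refine chi_eq_zero_of_lift (C := C) (fun f => ?_) (fun s hs ω hω => ?_) i
    · refine Subtype.ext (funext fun pt => ?_)
      have h1 := htop f f.2 (top N) pt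
      rw [coe_ite_form, applyFO_coe (hC N), realizeP_fromDat,
        if_pos (show top N = fun _ => true from rfl)] at h1
      exact h1
    · refine Subtype.ext (funext fun pt => ?_)
      have h1 := hcomm s hs.le (fun ε => (ω ε : Fn N)) (fun ε => (ω ε).2)
        (fun ε hε => by rw [hω ε hε]; rfl) (top N) pt
      rw [applyFO_coe (hC s), dH_coe, dH_coe, applyFO_coe (hC (s + 1))] at h1
      exact h1
  · obtain ⟨M, h1, h2, h3, -⟩ := hback h
    exact ⟨M, h1, h2, h3⟩

end JetBundle
end
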